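/- arXiv:2405.16841 — 12 statements merged into one kernel-verified Lean document; each statement's English description precedes it below -/
import Mathlib

section
/- Let n ≥ 1 and let P be an n×n real signed permutation matrix all of whose complex eigenvalues have nonpositive real part. Then P can be written as P = R − D, where R is a real skew-symmetric matrix (Rᵀ = −R) and D is a diagonal matrix all of whose diagonal entries are 0 or 1. -/
/-- A real signed permutation matrix: all entries in `{-1, 0, 1}`, with exactly one
nonzero entry in each row and each column. -/
def IsSignedPerm {n : ℕ} (P : Matrix (Fin n) (Fin n) ℝ) : Prop :=
  (∀ i j, P i j = -1 ∨ P i j = 0 ∨ P i j = 1) ∧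
  (∀ i, ∃! j, P i j ≠ 0) ∧ (∀ j, ∃! i, P i j ≠ 0)

theorem sp_orth {n : ℕ} (P : Matrix (Fin n) (Fin n) ℝ) (hP : IsSignedPerm P) :
    P * P.transpose = 1 := by
  obtain ⟨h1, h2, h3⟩ := hP
  ext i k
  rw [Matrix.mul_apply]
  obtain ⟨j, hj, hju⟩ := h2 i
  rw [Finset.sum_eq_single j]
  · by_cases hik : i = k
    · subst hik
      simp only [Matrix.transpose_apply, Matrix.one_apply_eq]
      rcases h1 i j with h | h | h
      · rw [h]; norm_num
      · exact absurd h hj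
      · rw [h]; norm_num
    · rw [Matrix.one_apply_ne hik, Matrix.transpose_apply]
      have : P k j = 0 := by
        by_contra hk
        exact hik ((h3 j).unique hj hk)
      rw [this, mul_zero]
  · intro b _ hb
    have : P i b = 0 := by
      by_contra h
      exact hb (hju b h)
    rw [this, zero_mul]
  · simp

theorem sp_psd {n : ℕ} (P : Matrix (Fin n) (Fin n) ℝ) (hP : IsSignedPerm P)
    (hspec : ∀ z ∈ spectrum ℂ (P.map Complex.ofReal), z.re ≤ 0) :
    (-(P + P.transpose)).PosSemidef := by
  have ho := sp_orth P hP
  have hH : (-(P + P.transpose)).IsHermitian := by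
    rw [Matrix.IsHermitian, Matrix.conjTranspose_eq_transpose_of_trivial]
    simp [add_comm]
  rw [hH.posSemidef_iff_eigenvalues_nonneg]
  intro i
  show 0 ≤ hH.eigenvalues i
  have hm := hH.eigenvalues_mem_spectrum_real i
  generalize hH.eigenvalues i = m at hm
  rw [spectrum.mem_iff, Matrix.isUnit_iff_isUnit_det, isUnit_iff_ne_zero, not_not] at hm
  set M : Matrix (Fin n) (Fin n) ℂ := P.map Complex.ofReal with hM
  set T : Matrix (Fin n) (Fin n) ℂ := P.transpose.map Complex.ofReal with hT
  have hMT : M * T = 1 := by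
    have := congrArg (fun X : Matrix (Fin n) (Fin n) ℝ => Complex.ofRealHom.mapMatrix X) ho
    simp only [map_mul, map_one] at this
    exact this
  have hd : ((m : ℂ) • (1 : Matrix (Fin n) (Fin n) ℂ) + (M + T)).det = 0 := by
    have h2 := congrArg Complex.ofRealHom hm
    rw [RingHom.map_det, map_zero] at h2
    rw [← h2]
    congr 1
    ext a b
    by_cases hab : a = b
    · subst hab
      simp [hM, hT, Matrix.algebraMap_matrix_apply]
      try ring
    · simp [hM, hT, Matrix.algebraMap_matrix_apply, hab]
      try ring
  obtain ⟨s, hs⟩ := IsAlgClosed.exists_pow_nat_eq ((m : ℂ) ^ 2 - 4) (n := 2) (by norm_num)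
  obtain ⟨z, w, hzw, hsum⟩ : ∃ z w : ℂ, z * w = 1 ∧ z + w = -m :=
    ⟨(-m + s) / 2, (-m - s) / 2, by linear_combination (-1 / 4) * hs, by ring⟩
  have hf : (z • (1 : Matrix (Fin n) (Fin n) ℂ) - M) * (w • (1 : Matrix (Fin n) (Fin n) ℂ) - M)
      = M * ((m : ℂ) • (1 : Matrix (Fin n) (Fin n) ℂ) + (M + T)) := by
    have hm' : (m : ℂ) = -(z + w) := by rw [hsum]; ring
    simp only [sub_mul, mul_sub, mul_add, hMT, smul_mul_assoc, mul_smul_comm, one_mul, mul_one,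
      hm']
    match_scalars <;> first | ring1 | linear_combination hzw
  have hdet := congrArg Matrix.det hf
  rw [Matrix.det_mul, Matrix.det_mul, hd, mul_zero] at hdet
  have key : ∀ u : ℂ, (u • (1 : Matrix (Fin n) (Fin n) ℂ) - M).det = 0 → u.re ≤ 0 := by
    intro u hu
    apply hspec
    rw [spectrum.mem_iff, Matrix.isUnit_iff_isUnit_det, isUnit_iff_ne_zero, not_not,
      Algebra.algebraMap_eq_smul_one]
    exact hu
  have inv : ∀ u v : ℂ, u * v = 1 → u.re ≤ 0 → v.re ≤ 0 := by
    intro u v huv hu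
    rw [eq_inv_of_mul_eq_one_right huv, Complex.inv_re]
    exact div_nonpos_of_nonpos_of_nonneg hu (Complex.normSq_nonneg u)
  have hre := congrArg Complex.re hsum
  simp at hre
  rcases mul_eq_zero.mp hdet with h | h
  · have h1 := key z h
    have h2 := inv z w hzw h1
    linarith
  · have h1 := key w h
    have h2 := inv w z (by rw [mul_comm, hzw]) h1
    linarith

/-- A real signed permutation matrix all of whose complex eigenvalues
have nonpositive real part can be written as `R - D` with `R` skew-symmetric and `D`
diagonal with entries 0 or 1. -/
theorem stmt0 (n : ℕ) (hn : 1 ≤ n) (P : Matrix (Fin n) (Fin n) ℝ)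
    (hP : IsSignedPerm P)
    (hspec : ∀ z ∈ spectrum ℂ (P.map Complex.ofReal), z.re ≤ 0) :
    ∃ (R D : Matrix (Fin n) (Fin n) ℝ) (d : Fin n → ℝ),
      R.transpose = -R ∧ D = Matrix.diagonal d ∧ (∀ i, d i = 0 ∨ d i = 1) ∧
      P = R - D := by
  have hpsd := sp_psd P hP hspec
  have hz : ∀ i j, P i i = 0 → P i j = -P j i := by
    intro i j hi
    have h := (hpsd.dotProduct_mulVec_zero_iff (Pi.single i 1)).mp (by simp [hi])
    have := congrFun h j
    simp at this
    linarith
  refine ⟨P + Matrix.diagonal (fun i => -P i i), _, fun i => -P i i, ?_, rfl, ?_, by simp⟩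
  · ext i j
    by_cases hij : i = j
    · subst hij; simp
    · have hji : j ≠ i := fun h => hij h.symm
      simp only [Matrix.transpose_apply, Matrix.add_apply, Matrix.neg_apply,
        Matrix.diagonal_apply_ne _ hij, Matrix.diagonal_apply_ne _ hji, add_zero]
      by_cases hi : P i i = 0
      · rw [hz i j hi]; ring
      · have a : P i j = 0 := by
          by_contra h
          exact hij ((hP.2.1 i).unique hi h)
        have b : P j i = 0 := by
          by_contra h
          exact hij ((hP.2.2 i).unique hi h)
        rw [a, b]; simp
  · intro i
    have h := hpsd.diag_nonneg (i := i)
    simp at h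
    rcases hP.1 i i with h' | h' | h'
    · right; simp [h']
    · left; simp [h']
    · linarith
end

section
/- Let C be an n×n real signed permutation matrix whose underlying permutation is a single n-cycle, and let s ∈ {1, −1} be the product of the n nonzero entries of C. Then the characteristic polynomial of C (over ℂ) is Xⁿ − s; equivalently, the complex eigenvalues of C are exactly the n-th roots of s. -/
open Polynomial in
theorem charpoly_cycle_aux (n : ℕ) (hn : 2 ≤ n) (M : Matrix (Fin n) (Fin n) ℂ)
    (σ : Equiv.Perm (Fin n)) (h0 : ∀ i j, i ≠ σ j → M i j = 0)
    (hcyc : σ.IsCycleOn (Set.univ : Set (Fin n))) :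
    M.charpoly = X ^ n - C (∏ j, M (σ j) j) := by
  have hnt : (Set.univ : Set (Fin n)).Nontrivial :=
    ⟨⟨0, by omega⟩, trivial, ⟨1, by omega⟩, trivial, by simp⟩
  have hfix : ∀ j, σ j ≠ j := fun j => hcyc.apply_ne hnt trivial
  have hsup : σ.support = Finset.univ := by
    ext j; simp [hfix j]
  have hc : σ.IsCycle := by
    rw [Equiv.Perm.isCycle_iff_exists_isCycleOn]
    exact ⟨Set.univ, hnt, hcyc, fun _ _ => trivial⟩
  have hsgn := hc.sign
  rw [hsup, Finset.card_univ, Fintype.card_fin] at hsgn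
  have hne : (1 : Equiv.Perm (Fin n)) ≠ σ := by
    intro h
    exact hfix ⟨0, by omega⟩ (by rw [← h]; rfl)
  rw [Matrix.charpoly, Matrix.det_apply', 
    ← Finset.sum_subset (Finset.subset_univ {1, σ}), Finset.sum_pair hne]
  · have h1 : ∀ j, M.charmatrix j j = X := by
      intro j
      rw [Matrix.charmatrix_apply_eq, h0 j j (hfix j).symm]; simp
    have h2 : ∀ j, M.charmatrix (σ j) j = - C (M (σ j) j) := by
      intro j
      rw [Matrix.charmatrix_apply_ne _ _ _ (hfix j)]
    simp only [Equiv.Perm.sign_one, Equiv.Perm.one_apply, h1, h2, hsgn, Finset.prod_neg,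
      Finset.prod_const, Finset.card_univ, Fintype.card_fin, map_prod]
    push_cast
    rw [neg_mul, ← mul_assoc, ← mul_pow]
    simp [sub_eq_add_neg]
  · intro τ _ hτ
    simp only [Finset.mem_insert, Finset.mem_singleton, not_or] at hτ
    by_contra hcon
    have hp := right_ne_zero_of_mul hcon
    rw [Finset.prod_ne_zero_iff] at hp
    have key : ∀ j, τ j = j ∨ τ j = σ j := by
      intro j
      by_contra! hj
      apply hp j (Finset.mem_univ _)
      rw [Matrix.charmatrix_apply_ne _ _ _ hj.1, h0 _ _ hj.2]; simp
    have step : ∀ j, τ j = σ j → τ (σ j) = σ (σ j) := by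
      intro j hj
      rcases key (σ j) with h | h
      · exact absurd (τ.injective (h.trans hj.symm)) (hfix j)
      · exact h
    obtain ⟨a, ha⟩ : ∃ a, τ a = σ a := by
      by_contra! hall
      exact hτ.1 (Equiv.ext fun j => (key j).resolve_right (hall j))
    apply hτ.2
    ext1 b
    obtain ⟨k, rfl⟩ : ∃ k : ℕ, (σ ^ k) a = b := by
      have := hc.exists_pow_eq (hfix a) (hfix b)
      exact this
    induction k with
    | zero => simpa using ha
    | succ k ih =>
      rw [pow_succ', Equiv.Perm.mul_apply]
      exact step _ ih

theorem stmt1 (n : ℕ) (hn : 1 ≤ n) (C : Matrix (Fin n) (Fin n) ℝ)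
    (hC : IsSignedPerm C) (σ : Equiv.Perm (Fin n))
    (hσ : ∀ j, C (σ j) j ≠ 0)
    (hcyc : σ.IsCycleOn (Set.univ : Set (Fin n)))
    (s : ℝ) (hs : s = ∏ j, C (σ j) j) :
    (C.map Complex.ofReal).charpoly = Polynomial.X ^ n - Polynomial.C (s : ℂ) ∧
    ∀ z : ℂ, z ∈ spectrum ℂ (C.map Complex.ofReal) ↔ z ^ n = (s : ℂ) := by
  have main : (C.map Complex.ofReal).charpoly = Polynomial.X ^ n - Polynomial.C (s : ℂ) := by
    rcases Nat.lt_or_ge n 2 with h | h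
    · obtain rfl : n = 1 := by omega
      have : σ 0 = 0 := Subsingleton.elim _ _
      simp [Matrix.charpoly, Matrix.charmatrix_apply, hs, this]
    · rw [charpoly_cycle_aux n h _ σ _ hcyc, hs]
      · simp
      · intro i j hij
        by_contra hne
        apply hij
        refine (hC.2.2 j).unique ?_ (hσ j)
        intro h0
        simp [h0] at hne
  refine ⟨main, fun z => ?_⟩
  rw [Matrix.mem_spectrum_iff_isRoot_charpoly, main]
  simp [sub_eq_zero]
end

section
/- Let n ≥ 1 be an integer and s ∈ {1, −1}. If every complex number z satisfying zⁿ = s has nonpositive real part, then either n = 1 and s = −1, or n = 2 and s = −1. -/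
/-- If every complex n-th root of `s = ±1` has nonpositive real part,
then `n = 1` and `s = -1`, or `n = 2` and `s = -1`. -/
theorem stmt2 (n : ℕ) (hn : 1 ≤ n) (s : ℝ) (hs : s = 1 ∨ s = -1)
    (h : ∀ z : ℂ, z ^ n = (s : ℂ) → z.re ≤ 0) :
    (n = 1 ∧ s = -1) ∨ (n = 2 ∧ s = -1) := by
  rcases hs with rfl | rfl
  · have := h 1 (by simp)
    norm_num at this
  · by_cases h3 : 3 ≤ n
    · exfalso
      have hn0 : (n : ℂ) ≠ 0 := by
        exact_mod_cast (by omega : n ≠ 0)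
      have h1 := h (Complex.exp (((Real.pi / n : ℝ) : ℂ) * Complex.I)) (by
        rw [← Complex.exp_nat_mul]
        have : (n : ℂ) * (((Real.pi / n : ℝ) : ℂ) * Complex.I) = Real.pi * Complex.I := by
          push_cast
          field_simp
        rw [this, Complex.exp_pi_mul_I]
        simp)
      rw [Complex.exp_ofReal_mul_I_re] at h1
      have h3' : (3 : ℝ) ≤ n := by exact_mod_cast h3
      have hp := Real.pi_pos
      have hpos : 0 < Real.pi / n := by positivity
      have hlt : Real.pi / n < Real.pi / 2 := by
        apply div_lt_div_of_pos_left hp <;> linarith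
      have := Real.cos_pos_of_mem_Ioo ⟨by linarith, hlt⟩
      linarith
    · have : n = 1 ∨ n = 2 := by omega
      rcases this with rfl | rfl <;> simp
end

section
/- Let m ≥ 2, let P be an (m−1)×(m−1) real signed permutation matrix, let σ₀ ∈ {1, −1}, and let A be the m×m matrix with entry σ₀ in position (1, m), entries A_{i+1,j} = P_{ij} for 1 ≤ i, j ≤ m−1, and all other entries zero. If all complex eigenvalues of A are real, then A = S + D where S is a real symmetric matrix and D is a diagonal matrix all of whose diagonal entries lie in {−1, 0, 1}. -/
/-- The m×m matrix with entry `s` in (1-indexed) position (1, m), the matrix `P` in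
positions `A_{i+1,j} = P_{ij}` for `1 ≤ i, j ≤ m-1`, and all other entries zero. -/
noncomputable def embedA (m : ℕ) (s : ℝ) (P : Matrix (Fin (m-1)) (Fin (m-1)) ℝ) :
    Matrix (Fin m) (Fin m) ℝ := fun i j =>
  if hi : (i : ℕ) = 0 then (if (j : ℕ) = m - 1 then s else 0)
  else if hj : (j : ℕ) < m - 1 then
    P ⟨(i : ℕ) - 1, by have := i.isLt; omega⟩ ⟨(j : ℕ), hj⟩
  else 0

open scoped Matrix.Norms.L2Operator in
theorem symm_of_real {m : ℕ} (A : Matrix (Fin m) (Fin m) ℝ) (h : A * A.transpose = 1)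
    (hreal : ∀ z ∈ spectrum ℂ (A.map Complex.ofReal), z.im = 0) : A.transpose = A := by
  have h' : A.transpose * A = 1 := mul_eq_one_comm.mp h
  have hs : star (A.map Complex.ofReal) = A.transpose.map Complex.ofReal := by
    ext i j; simp [Matrix.star_apply]
  have hmul : ∀ B C : Matrix (Fin m) (Fin m) ℝ, B.map Complex.ofReal * C.map Complex.ofReal
      = (B * C).map Complex.ofReal := fun B C =>
    (Matrix.map_mul (f := Complex.ofRealHom)).symm
  have hn : IsStarNormal (A.map Complex.ofReal) := by
    constructor
    rw [hs]
    show _ * _ = _ * _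
    rw [hmul, hmul, h, h']
  have hsa : IsSelfAdjoint (A.map Complex.ofReal) := by
    refine isSelfAdjoint_iff_isStarNormal_and_quasispectrumRestricts.mpr
      ⟨hn, SpectrumRestricts.real_iff.mpr ?_⟩
    intro z hz
    exact Complex.ext (by simp) (by simp [hreal z hz])
  have h2 : A.transpose.map Complex.ofReal = A.map Complex.ofReal := hs ▸ hsa.star_eq
  ext i j
  exact Complex.ofReal_injective (congrFun (congrFun h2 i) j)

/-- If the m×m matrix `A` built from `σ₀` and a signed permutation
matrix `P` has only real complex eigenvalues, then `A = S + D` with `S` symmetric and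
`D` diagonal with entries in `{-1, 0, 1}`. -/
theorem stmt3 (m : ℕ) (hm : 2 ≤ m) (P : Matrix (Fin (m-1)) (Fin (m-1)) ℝ)
    (hP : IsSignedPerm P) (σ₀ : ℝ) (hσ : σ₀ = 1 ∨ σ₀ = -1)
    (hreal : ∀ z ∈ spectrum ℂ ((embedA m σ₀ P).map Complex.ofReal), z.im = 0) :
    ∃ (S D : Matrix (Fin m) (Fin m) ℝ) (d : Fin m → ℝ),
      S.transpose = S ∧ D = Matrix.diagonal d ∧
      (∀ i, d i = -1 ∨ d i = 0 ∨ d i = 1) ∧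
      embedA m σ₀ P = S + D := by
  have hrow : ∀ i, ∃ j, embedA m σ₀ P i j * embedA m σ₀ P i j = 1 ∧
      ∀ j', j' ≠ j → embedA m σ₀ P i j' = 0 := by
    intro i
    by_cases hi : (i : ℕ) = 0
    · refine ⟨⟨m - 1, by omega⟩, ?_, ?_⟩
      · rcases hσ with h | h <;> simp [embedA, hi, h]
      · intro j' hj'
        have : (j' : ℕ) ≠ m - 1 := fun h => hj' (Fin.ext h)
        simp [embedA, hi, this]
    · have hlt : (i : ℕ) - 1 < m - 1 := by have := i.isLt; omega
      obtain ⟨j, hj, hu⟩ := hP.2.1 ⟨(i : ℕ) - 1, hlt⟩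
      refine ⟨⟨j, by have := j.isLt; omega⟩, ?_, ?_⟩
      · simp only [embedA, hi, dif_neg, not_false_eq_true, j.isLt, dif_pos]
        rcases hP.1 ⟨(i : ℕ) - 1, hlt⟩ j with h | h | h
        · simp [h]
        · exact absurd h hj
        · simp [h]
      · intro j' hj'
        by_cases hl : (j' : ℕ) < m - 1
        · simp only [embedA, hi, dif_neg, not_false_eq_true, hl, dif_pos]
          by_contra hne
          apply hj'
          have := hu _ hne
          subst this
          rfl
        · simp [embedA, hi, hl]
  have hcol : ∀ i k j, embedA m σ₀ P i j ≠ 0 → embedA m σ₀ P k j ≠ 0 → i = k := by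
    intro i k j h1 h2
    by_cases hi : (i : ℕ) = 0 <;> by_cases hk : (k : ℕ) = 0
    · exact Fin.ext (hi.trans hk.symm)
    · exfalso
      by_cases hl : (j : ℕ) < m - 1
      · exact h1 (by simp [embedA, hi, hl.ne])
      · exact h2 (by simp [embedA, hk, hl])
    · exfalso
      by_cases hl : (j : ℕ) < m - 1
      · exact h2 (by simp [embedA, hk, hl.ne])
      · exact h1 (by simp [embedA, hi, hl])
    · by_cases hl : (j : ℕ) < m - 1
      · simp only [embedA, hi, hk, dif_neg, not_false_eq_true, hl, dif_pos] at h1 h2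
        have := congrArg Fin.val ((hP.2.2 ⟨j, hl⟩).unique h1 h2)
        simp only at this
        exact Fin.ext (by omega)
      · exact absurd (by simp [embedA, hi, hl]) h1
  generalize embedA m σ₀ P = A at *
  have horth : A * A.transpose = 1 := by
    ext i k
    obtain ⟨j, hj, hz⟩ := hrow i
    rw [Matrix.mul_apply, Finset.sum_eq_single j]
    · by_cases hik : i = k
      · subst hik; simpa using hj
      · rw [Matrix.one_apply_ne hik, Matrix.transpose_apply]
        have : A k j = 0 := by
          by_contra h
          exact hik (hcol i k j (by intro h0; simp [h0] at hj) h)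
        simp [this]
    · intro j' _ h; simp [hz j' h]
    · simp
  have hsym := symm_of_real A horth hreal
  exact ⟨A, 0, 0, hsym, by simp, by simp, by simp⟩
end

section
/- Let m ≥ 2, let P be an (m−1)×(m−1) real signed permutation matrix, let σ₀ ∈ {1, −1}, and let A be the m×m matrix with entry σ₀ in position (1, m), entries A_{i+1,j} = P_{ij} for 1 ≤ i, j ≤ m−1, and all other entries zero. Suppose that every complex eigenvalue of P has nonpositive real part and that all complex eigenvalues of A are real. Then A is anti-diagonal: A_{ij} = 0 whenever i + j ≠ m + 1. -/
section helpers
open scoped Matrix.Norms.L2Operator MatrixOrder ComplexOrder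

theorem sp_normal {n : ℕ} {M : Matrix (Fin n) (Fin n) ℝ} (h : IsSignedPerm M) :
    IsStarNormal (M.map Complex.ofReal) := by
  obtain ⟨h1, h2, h3⟩ := h
  have key : M * M.transpose = 1 := by
    ext i j
    rw [Matrix.mul_apply]
    simp only [Matrix.transpose_apply]
    obtain ⟨k, hk, hu⟩ := h2 i
    have hz : ∀ l, l ≠ k → M i l = 0 := fun l hl => by
      by_contra hne
      exact hl (hu l hne)
    rw [Finset.sum_eq_single k (fun l _ hl => by rw [hz l hl, zero_mul]) (by simp)]
    by_cases hij : i = j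
    · subst hij
      rw [Matrix.one_apply_eq]
      rcases h1 i k with h | h | h
      · rw [h]; norm_num
      · exact absurd h hk
      · rw [h]; norm_num
    · rw [Matrix.one_apply_ne hij]
      have : M j k = 0 := by
        by_contra hne
        exact hij ((h3 k).unique hk hne)
      rw [this, mul_zero]
  have key2 : M.transpose * M = 1 := mul_eq_one_comm.mp key
  have hs : star (M.map Complex.ofReal) = M.transpose.map Complex.ofReal := by
    ext i j
    simp [Matrix.star_apply]
  constructor
  rw [hs]
  have e1 := Matrix.map_mul (L := M.transpose) (M := M) (f := Complex.ofRealHom)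
  have e2 := Matrix.map_mul (L := M) (M := M.transpose) (f := Complex.ofRealHom)
  rw [key2] at e1
  rw [key] at e2
  exact e1.symm.trans e2

theorem sp_symm_of_real {n : ℕ} {M : Matrix (Fin n) (Fin n) ℝ} (h : IsSignedPerm M)
    (hr : ∀ z ∈ spectrum ℂ (M.map Complex.ofReal), z.im = 0) (i j : Fin n) : M i j = M j i := by
  have hn := sp_normal h
  have : star (M.map Complex.ofReal) = M.map Complex.ofReal := by
    conv_rhs => rw [← cfc_id' ℂ (M.map Complex.ofReal)]
    conv_lhs => rw [← cfc_id' ℂ (M.map Complex.ofReal)]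
    rw [← cfc_star]
    apply cfc_congr
    intro z hz
    exact Complex.conj_eq_iff_im.mpr (hr z hz)
  have := congrFun (congrFun this j) i
  simpa [Matrix.star_apply] using this

theorem sp_symm_of_nonpos {n : ℕ} {M : Matrix (Fin n) (Fin n) ℝ} (h : IsSignedPerm M)
    (hr : ∀ z ∈ spectrum ℂ (M.map Complex.ofReal), z.re ≤ 0) (i j : Fin n)
    (hij : M i j ≠ 0) : M j i ≠ 0 := by
  have hn := sp_normal h
  intro hji
  have hne : i ≠ j := by rintro rfl; exact hij hji
  have hii : M i i = 0 := by
    by_contra hc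
    exact hne ((h.2.1 i).unique hc hij)
  have hjj : M j j = 0 := by
    by_contra hc
    exact hne ((h.2.2 j).unique hij hc)
  set Q := M.map Complex.ofReal with hQ
  have hN : 0 ≤ -(Q + star Q) := by
    have : -(Q + star Q) = cfc (fun z : ℂ => -(z + star z)) Q := by
      rw [cfc_neg, cfc_add .., cfc_star, cfc_id' ℂ Q]
    rw [this]
    apply cfc_nonneg
    intro z hz
    have := hr z hz
    rw [Complex.le_def]
    constructor
    · simp; linarith
    · simp
  have hps := (Matrix.nonneg_iff_posSemidef.mp hN).submatrix ![i, j]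
  have hd := hps.det_nonneg
  rw [Matrix.det_fin_two] at hd
  simp [hQ, Matrix.star_apply, hii, hjj, hji] at hd
  rw [← Complex.ofReal_mul] at hd
  have hd' : M i j * M i j ≤ 0 := by exact_mod_cast hd
  exact hij (mul_self_eq_zero.mp (le_antisymm hd' (mul_self_nonneg _)))

end helpers

theorem embedA_zero (n : ℕ) (s : ℝ) (P : Matrix (Fin n) (Fin n) ℝ) (j : Fin (n+1)) :
    embedA (n+1) s P 0 j = if j = Fin.last n then s else 0 := by
  simp [embedA, Fin.ext_iff]

theorem embedA_succ_cast (n : ℕ) (s : ℝ) (P : Matrix (Fin n) (Fin n) ℝ) (i j : Fin n) :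
    embedA (n+1) s P i.succ j.castSucc = P i j := by
  simp [embedA]

theorem embedA_succ_last (n : ℕ) (s : ℝ) (P : Matrix (Fin n) (Fin n) ℝ) (i : Fin n) :
    embedA (n+1) s P i.succ (Fin.last n) = 0 := by
  simp [embedA]

theorem embedA_sp (n : ℕ) (s : ℝ) (hs : s = 1 ∨ s = -1) (P : Matrix (Fin n) (Fin n) ℝ)
    (hP : IsSignedPerm P) : IsSignedPerm (embedA (n+1) s P) := by
  have hs0 : s ≠ 0 := by rcases hs with h | h <;> rw [h] <;> norm_num
  obtain ⟨h1, h2, h3⟩ := hP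
  refine ⟨fun i j => ?_, fun i => ?_, fun j => ?_⟩
  · induction i using Fin.cases with
    | zero => rw [embedA_zero]; split_ifs <;> tauto
    | succ i =>
      induction j using Fin.lastCases with
      | last => rw [embedA_succ_last]; simp
      | cast j => rw [embedA_succ_cast]; exact h1 i j
  · induction i using Fin.cases with
    | zero =>
      refine ⟨Fin.last n, ?_, fun j hj => ?_⟩
      · simpa [embedA_zero] using hs0
      · by_contra hc
        simp [embedA_zero, hc] at hj
    | succ i =>
      obtain ⟨k, hk, hu⟩ := h2 i
      refine ⟨k.castSucc, by simpa only [embedA_succ_cast] using hk, fun j hj => ?_⟩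
      induction j using Fin.lastCases with
      | last => exact absurd (embedA_succ_last n s P i) hj
      | cast j => 
        simp only [embedA_succ_cast] at hj
        rw [hu j hj]
  · induction j using Fin.lastCases with
    | last =>
      refine ⟨0, ?_, fun i hi => ?_⟩
      · simpa [embedA_zero] using hs0
      · induction i using Fin.cases with
        | zero => rfl
        | succ i => exact absurd (embedA_succ_last n s P i) hi
    | cast j =>
      obtain ⟨k, hk, hu⟩ := h3 j
      refine ⟨k.succ, by simpa only [embedA_succ_cast] using hk, fun i hi => ?_⟩
      induction i using Fin.cases with
      | zero =>
        simp only [embedA_zero, (Fin.castSucc_lt_last j).ne, if_false] at hi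
        exact absurd rfl hi
      | succ i =>
        simp only [embedA_succ_cast] at hi
        rw [hu i hi]

/-- If every complex eigenvalue of the signed permutation matrix `P`
has nonpositive real part and all complex eigenvalues of `A` are real, then `A` is
anti-diagonal: `A_{ij} = 0` whenever `i + j ≠ m + 1` (1-indexed). -/
theorem stmt4 (m : ℕ) (hm : 2 ≤ m) (P : Matrix (Fin (m-1)) (Fin (m-1)) ℝ)
    (hP : IsSignedPerm P) (σ₀ : ℝ) (hσ : σ₀ = 1 ∨ σ₀ = -1)
    (hPspec : ∀ z ∈ spectrum ℂ (P.map Complex.ofReal), z.re ≤ 0)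
    (hreal : ∀ z ∈ spectrum ℂ ((embedA m σ₀ P).map Complex.ofReal), z.im = 0) :
    ∀ i j : Fin m, ((i : ℕ) + 1) + ((j : ℕ) + 1) ≠ m + 1 → embedA m σ₀ P i j = 0 := by
  obtain ⟨n, rfl⟩ : ∃ n, m = n + 1 := ⟨m - 1, by omega⟩
  have hA := embedA_sp n σ₀ hσ P hP
  have hs0 : σ₀ ≠ 0 := by rcases hσ with h | h <;> rw [h] <;> norm_num
  have hsym := sp_symm_of_real hA hreal
  have key : ∀ k : ℕ, ∀ i j : Fin (n+1), (i : ℕ) = k → (i : ℕ) + j = n →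
      embedA (n+1) σ₀ P i j ≠ 0 := by
    intro k
    induction k with
    | zero =>
      intro i j hi hij
      have hi0 : i = 0 := Fin.ext hi
      have hj : j = Fin.last n := Fin.ext (by simp; omega)
      rw [hi0, embedA_zero, if_pos hj]
      exact hs0
    | succ k ih =>
      intro i j hi hij
      have hj1 : (j : ℕ) < n := by omega
      have hk : k < n := by omega
      have hi1 : i = (⟨k, hk⟩ : Fin n).succ := Fin.ext hi
      have hj2 : j = (⟨j, hj1⟩ : Fin n).castSucc := rfl
      have h0 := ih (⟨k, hk⟩ : Fin n).castSucc (⟨j, hj1⟩ : Fin n).succ rfl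
        (by simp; omega)
      rw [hsym, embedA_succ_cast] at h0
      rw [hi1, hj2, embedA_succ_cast]
      exact sp_symm_of_nonpos hP hPspec _ _ h0
  intro i j hij
  by_contra hc
  have hi := i.isLt
  have h1 := key i i ⟨n - i, by omega⟩ rfl (by simp; omega)
  have h2 := (hA.2.1 i).unique hc h1
  apply hij
  rw [h2]
  simp
  omega
end

section
/- Let m ≥ 2, let P be an (m−1)×(m−1) real signed permutation matrix, let σ₀ ∈ {1, −1}, and let A be the m×m matrix with entry σ₀ in position (1, m), entries A_{i+1,j} = P_{ij} for 1 ≤ i, j ≤ m−1, and all other entries zero. Suppose that every complex eigenvalue of P has nonpositive real part and that all complex eigenvalues of A are real. Then P = P*, i.e., the entries of P (1-indexed) are: p_{ij} = 0 if i + j ≠ m; and for i + j = m, p_{ij} = σ₀(−1)^{j−1} if j ≤ m/2 and p_{ij} = σ₀(−1)^{m−j} if j > m/2. -/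
/-- The (m-1)×(m-1) matrix `P*` with (1-indexed) entries `p_{ij} = 0` if `i + j ≠ m`,
and for `i + j = m`: `p_{ij} = σ₀ (-1)^(j-1)` if `j ≤ m/2`, `p_{ij} = σ₀ (-1)^(m-j)`
if `j > m/2`. -/
noncomputable def Pstar (m : ℕ) (σ₀ : ℝ) : Matrix (Fin (m-1)) (Fin (m-1)) ℝ := fun i j =>
  if (i : ℕ) + (j : ℕ) + 2 = m then
    (if 2 * ((j : ℕ) + 1) ≤ m then σ₀ * (-1) ^ (j : ℕ)
     else σ₀ * (-1) ^ (m - ((j : ℕ) + 1)))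
  else 0

section Aux

open scoped Matrix.Norms.L2Operator ComplexOrder

lemma aux_orth {n : ℕ} (Q : Matrix (Fin n) (Fin n) ℝ)
    (h1 : ∀ i j, Q i j = -1 ∨ Q i j = 0 ∨ Q i j = 1)
    (h2 : ∀ i, ∃ j, Q i j ≠ 0 ∧ ∀ k, Q i k ≠ 0 → k = j)
    (h3 : ∀ j i i', Q i j ≠ 0 → Q i' j ≠ 0 → i = i') :
    Q * Q.transpose = 1 := by
  ext i i'
  rw [Matrix.mul_apply]
  simp only [Matrix.transpose_apply]
  obtain ⟨j, hj, hj'⟩ := h2 i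
  rw [Finset.sum_eq_single j]
  · by_cases h : i = i'
    · subst h
      rw [Matrix.one_apply_eq]
      rcases h1 i j with h | h | h <;> simp_all
    · rw [Matrix.one_apply_ne h]
      by_contra hc
      exact h (h3 j i i' hj (right_ne_zero_of_mul hc))
  · intro k _ hk
    have : Q i k = 0 := by
      by_contra hc
      exact hk (hj' k hc)
    simp [this]
  · simp

lemma aux_normal {n : ℕ} (Q : Matrix (Fin n) (Fin n) ℝ)
    (h : Q * Q.transpose = 1) : IsStarNormal (Q.map Complex.ofReal) := by
  have hs : star (Q.map Complex.ofReal) = Q.transpose.map Complex.ofReal := by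
    ext i j
    simp [Matrix.star_apply]
  have h' := mul_eq_one_comm.mp h
  constructor
  rw [hs, commute_iff_eq]
  have e1 := Matrix.map_mul (L := Q) (M := Q.transpose) (f := Complex.ofRealHom)
  have e2 := Matrix.map_mul (L := Q.transpose) (M := Q) (f := Complex.ofRealHom)
  rw [h] at e1
  rw [h'] at e2
  exact e2.symm.trans e1

lemma aux_symm {n : ℕ} (Q : Matrix (Fin n) (Fin n) ℝ)
    (h : Q * Q.transpose = 1)
    (hr : ∀ z ∈ spectrum ℂ (Q.map Complex.ofReal), z.im = 0) (i j : Fin n) :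
    Q i j = Q j i := by
  have hn := aux_normal Q h
  have h1 : star (Q.map Complex.ofReal) = Q.map Complex.ofReal := by
    rw [← cfc_star_id (R := ℂ) (Q.map Complex.ofReal)]
    conv_rhs => rw [← cfc_id ℂ (Q.map Complex.ofReal)]
    apply cfc_congr
    intro z hz
    exact Complex.conj_eq_iff_im.mpr (hr z hz)
  have h2 := congrFun (congrFun h1 j) i
  simpa [Matrix.star_apply] using h2

lemma aux_psd {n : ℕ} (Q : Matrix (Fin n) (Fin n) ℝ)
    (h : Q * Q.transpose = 1)
    (hr : ∀ z ∈ spectrum ℂ (Q.map Complex.ofReal), z.re ≤ 0) (i j : Fin n) :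
    (Q i j + Q j i)^2 ≤ 4 * Q i i * Q j j := by
  have hn := aux_normal Q h
  set M := Q.map Complex.ofReal with hM
  have hB : cfc (fun z : ℂ => -(z + star z)) M = -(M + star M) := by
    rw [cfc_neg (fun z : ℂ => z + star z) M, cfc_add M (fun z : ℂ => z) (fun z : ℂ => star z) ,
      cfc_id' ℂ M, cfc_star_id (R := ℂ) M]
  have hpsd : (-(M + star M)).PosSemidef := by
    rw [Matrix.posSemidef_iff_isHermitian_and_spectrum_nonneg]
    constructor
    · have : IsSelfAdjoint (-(M + star M)) := (IsSelfAdjoint.add_star_self M).neg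
      exact this
    · rw [← hB, cfc_map_spectrum (fun z : ℂ => -(z + star z)) M hn (by fun_prop)]
      rintro _ ⟨z, hz, rfl⟩
      have := hr z hz
      simp only [Set.mem_setOf_eq, Complex.le_def]
      constructor
      · simp; linarith
      · simp
  have h2 := (hpsd.submatrix ![i, j]).det_nonneg
  rw [Matrix.det_fin_two] at h2
  simp [Matrix.star_apply, hM] at h2
  have h3 : (0:ℝ) ≤ (-Q i i + -Q i i) * (-Q j j + -Q j j) - (-Q j i + -Q i j) * (-Q i j + -Q j i) := by
    have := (Complex.le_def.mp h2).1
    simp at this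
    linarith
  nlinarith

end Aux

theorem stmt5 (m : ℕ) (hm : 2 ≤ m) (P : Matrix (Fin (m-1)) (Fin (m-1)) ℝ)
    (hP : IsSignedPerm P) (σ₀ : ℝ) (hσ : σ₀ = 1 ∨ σ₀ = -1)
    (hPspec : ∀ z ∈ spectrum ℂ (P.map Complex.ofReal), z.re ≤ 0)
    (hreal : ∀ z ∈ spectrum ℂ ((embedA m σ₀ P).map Complex.ofReal), z.im = 0) :
    P = Pstar m σ₀ := by
  obtain ⟨hP1, hP2, hP3⟩ := hP
  have hσ0 : σ₀ ≠ 0 := by rcases hσ with h | h <;> simp [h]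
  have oP : P * P.transpose = 1 := by
    apply aux_orth P hP1
    · exact fun i => hP2 i
    · intro j i i' h h'
      exact (hP3 j).unique h h'
  have oA : embedA m σ₀ P * (embedA m σ₀ P).transpose = 1 := by
    apply aux_orth
    · intro i j
      unfold embedA
      split_ifs
      · tauto
      · simp
      · apply hP1
      · simp
    · intro i
      by_cases hi : (i : ℕ) = 0
      · refine ⟨⟨m-1, by omega⟩, by simp [embedA, hi, hσ0], ?_⟩
        intro k hk
        simp only [embedA, hi, dite_true] at hk
        ext
        by_contra hc
        simp at hc
        simp [hc] at hk
      · obtain ⟨j, hj, hj'⟩ := hP2 ⟨(i : ℕ) - 1, by have := i.isLt; omega⟩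
        refine ⟨⟨j, by omega⟩, by simpa [embedA, hi] using hj, ?_⟩
        intro k hk
        simp only [embedA, hi, dite_false] at hk
        split_ifs at hk with h
        · have := hj' _ hk
          ext
          simp [← this]
        · simp at hk
    · intro j i i' h h'
      unfold embedA at h h'
      split_ifs at h h' <;> first | (exfalso; omega) | (exact absurd rfl h) | (exact absurd rfl h') | skip
      · ext; omega
      · have := (hP3 _).unique h h'
        simp only [Fin.mk.injEq] at this
        ext; omega
  have sA := aux_symm _ oA hreal
  have sP : ∀ i j, i ≠ j → P i j = - P j i := by
    intro i j hij
    have h := aux_psd P oP hPspec i j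
    have hz : P i j = 0 ∧ P j i = 0 ∨ P i i = 0 := by
      by_contra hc
      push Not at hc
      obtain ⟨h1, h2⟩ := hc
      by_cases h3 : P i j = 0
      · exact hij ((hP3 i).unique h2 (h1 h3))
      · exact hij ((hP2 i).unique h2 h3)
    rcases hz with ⟨a, b⟩ | a
    · simp [a, b]
    · rw [a] at h
      have : (P i j + P j i)^2 = 0 := le_antisymm (by linarith) (sq_nonneg _)
      have := pow_eq_zero_iff (two_ne_zero) |>.mp this
      linarith
  -- first half of the antidiagonal
  have key : ∀ k (hk : 2 * (k + 1) ≤ m),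
      P ⟨m - 2 - k, by omega⟩ ⟨k, by omega⟩ = σ₀ * (-1) ^ k := by
    intro k
    induction k with
    | zero =>
      intro hk
      have := sA ⟨m - 1, by omega⟩ ⟨0, by omega⟩
      have e : m - 1 - 1 = m - 2 := by omega
      have e' : m - 1 ≠ 0 := by omega
      have e'' : 0 < m - 1 := by omega
      simpa [embedA, e, e', e''] using this
    | succ k ih =>
      intro hk
      have h1 := ih (by omega)
      have h2 := sP ⟨k, by omega⟩ ⟨m - 2 - k, by omega⟩ (by simp; omega)
      have h3 := sA ⟨m - 2 - k, by omega⟩ ⟨k + 1, by omega⟩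
      have e : m - 2 - k - 1 = m - 2 - (k + 1) := by omega
      have e1 : m - 2 - k ≠ 0 := by omega
      have e2 : m - 2 - k < m - 1 := by omega
      have e3 : k + 1 < m - 1 := by omega
      simp only [embedA, e, e1, e2, e3, dite_true, dite_false, Nat.add_eq_zero_iff, one_ne_zero,
        and_false, Nat.add_sub_cancel] at h3
      rw [h3, h2, h1]
      ring
  have anti : ∀ i j : Fin (m-1), (i : ℕ) + j + 2 = m → P i j = Pstar m σ₀ i j := by
    intro i j hij
    simp only [Pstar, hij, if_true]
    split_ifs with h
    · rw [← key j h]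
      congr 1
      ext; simp; omega
    · rw [sP i j (by intro h'; subst h'; omega)]
      have hk := key i (by omega)
      have : (⟨m - 2 - i, by omega⟩ : Fin (m-1)) = j := by ext; simp; omega
      rw [this] at hk
      rw [hk]
      have : m - ((j : ℕ) + 1) = i + 1 := by omega
      rw [this]; ring
  ext i j
  by_cases hij : (i : ℕ) + j + 2 = m
  · exact anti i j hij
  · have h0 : Pstar m σ₀ i j = 0 := by simp [Pstar, hij]
    rw [h0]
    by_contra hc
    have hj : m - 2 - (i : ℕ) < m - 1 := by omega
    have hn : P i ⟨m - 2 - i, hj⟩ ≠ 0 := by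
      rw [anti i _ (by simp; omega)]
      unfold Pstar
      have : (i : ℕ) + (m - 2 - i) + 2 = m := by omega
      simp only [this, if_true]
      split_ifs <;> simp [hσ0]
    have := (hP2 i).unique hc hn
    apply hij
    rw [this]; simp; omega
end

section
/- Let m ≥ 3 be odd, σ₀ ∈ {1, −1}, and P = P*. Let A be the m×m matrix with entry σ₀ in position (1, m), entries A_{i+1,j} = P_{ij} for 1 ≤ i, j ≤ m−1, and all other entries zero; let B be the m×m matrix with entries B_{i+1,j+1} = P_{ij} for 1 ≤ i, j ≤ m−1 and all other entries zero; and for τ > 0 let D_τ = diag(1, τ, τ, …, τ). Then for every k ∈ ℝ and every τ > 0, all complex eigenvalues of the matrix D_τ⁻¹(kA + iB) are real. -/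
/-- The m×m matrix with entries `B_{i+1,j+1} = P_{ij}` (1-indexed) for `1 ≤ i, j ≤ m-1`
and all other entries zero. -/
noncomputable def embedB (m : ℕ) (P : Matrix (Fin (m-1)) (Fin (m-1)) ℝ) :
    Matrix (Fin m) (Fin m) ℝ := fun i j =>
  if h : (i : ℕ) = 0 ∨ (j : ℕ) = 0 then 0
  else P ⟨(i : ℕ) - 1, by have := i.isLt; omega⟩ ⟨(j : ℕ) - 1, by have := j.isLt; omega⟩

/-- The diagonal matrix `D_τ = diag(1, τ, τ, …, τ)` (as a complex matrix). -/
noncomputable def Dmat (m : ℕ) (τ : ℝ) : Matrix (Fin m) (Fin m) ℂ :=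
  Matrix.diagonal (fun i => if (i : ℕ) = 0 then 1 else (τ : ℂ))

theorem aux_symmA (m : ℕ) (hm : 3 ≤ m) (hodd : Odd m) (s : ℝ) (i j : Fin m) :
    embedA m s (Pstar m s) i j = embedA m s (Pstar m s) j i := by
  obtain ⟨n, rfl⟩ := hodd
  have key : ∀ i j : Fin (2 * n + 1), embedA (2*n+1) s (Pstar (2*n+1) s) i j =
      if (i : ℕ) + j = 2 * n then s * (-1) ^ (min (i : ℕ) j) else 0 := by
    intro i j
    have hi := i.isLt
    have hj := j.isLt
    unfold embedA Pstar
    by_cases h0 : (i : ℕ) = 0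
    · simp [h0]
    · by_cases h1 : (i : ℕ) + j = 2 * n
      · have h2 : (j : ℕ) < 2 * n + 1 - 1 := by omega
        have h3 : (i : ℕ) - 1 + j + 2 = 2 * n + 1 := by omega
        simp only [h0, h1, h2, h3, dite_true, dite_false, if_true]
        split_ifs with h4
        · rw [min_eq_right (by omega)]
        · rw [min_eq_left (by omega)]
          congr 2
          omega
      · have h3 : ¬ ((i : ℕ) - 1 + j + 2 = 2 * n + 1) := by omega
        simp only [h0, h1, h3, dite_false, if_false]
        split_ifs <;> rfl
  rw [key, key, add_comm, min_comm]

theorem aux_symmB (m : ℕ) (hm : 3 ≤ m) (hodd : Odd m) (s : ℝ) (i j : Fin m) :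
    embedB m (Pstar m s) i j = - embedB m (Pstar m s) j i := by
  obtain ⟨n, rfl⟩ := hodd
  have hi := i.isLt
  have hj := j.isLt
  have hpow : ∀ a : ℕ, (-1 : ℝ) ^ (a + 1) = - (-1) ^ a := fun a => by ring
  unfold embedB Pstar
  by_cases h0 : (i : ℕ) = 0 ∨ (j : ℕ) = 0
  · rw [dif_pos h0, dif_pos h0.symm, neg_zero]
  · have h0' : ¬ ((j : ℕ) = 0 ∨ (i : ℕ) = 0) := by omega
    simp only [h0, h0', dite_false]
    by_cases h1 : (i : ℕ) + j = 2 * n + 1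
    · have h3 : (i : ℕ) - 1 + (j - 1) + 2 = 2 * n + 1 := by omega
      have h3' : (j : ℕ) - 1 + (i - 1) + 2 = 2 * n + 1 := by omega
      simp only [h3, h3', if_true]
      split_ifs with h4 h5 h5
      · omega
      · rw [show 2 * n + 1 - ((i : ℕ) - 1 + 1) = (j - 1 : ℕ) + 1 by omega, hpow]; ring
      · rw [show 2 * n + 1 - ((j : ℕ) - 1 + 1) = (i - 1 : ℕ) + 1 by omega, hpow]; ring
      · omega
    · have h3 : ¬ ((i : ℕ) - 1 + (j - 1) + 2 = 2 * n + 1) := by omega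
      have h3' : ¬ ((j : ℕ) - 1 + (i - 1) + 2 = 2 * n + 1) := by omega
      simp [h3, h3']

open scoped ComplexOrder in
theorem aux_real {m : ℕ} (D H : Matrix (Fin m) (Fin m) ℂ) (hD : D.PosDef) (hH : H.IsHermitian)
    (z : ℂ) (hz : z ∈ spectrum ℂ (D⁻¹ * H)) : z.im = 0 := by
  rw [← Matrix.spectrum_toLin', ← Module.End.hasEigenvalue_iff_mem_spectrum] at hz
  obtain ⟨v, hv⟩ := hz.exists_hasEigenvector
  have h1 : (D⁻¹ * H).mulVec v = z • v := by simpa using hv.apply_eq_smul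
  have h2 : H.mulVec v = z • D.mulVec v := by
    have := congrArg D.mulVec h1
    rwa [Matrix.mulVec_mulVec, ← Matrix.mul_assoc, Matrix.mul_nonsing_inv _
      ((Matrix.isUnit_iff_isUnit_det _).1 hD.isUnit), Matrix.one_mul, Matrix.mulVec_smul] at this
  have h3 := hH.im_star_dotProduct_mulVec_self v
  have h4 := hD.dotProduct_mulVec_pos hv.2
  rw [h2, dotProduct_smul] at h3
  rw [Complex.pos_iff] at h4
  obtain ⟨h5, h6⟩ := h4
  simp only [smul_eq_mul, RCLike.im_to_complex, Complex.mul_im, ← h6, mul_zero, zero_add] at h3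
  exact (mul_eq_zero.1 h3).resolve_right h5.ne'

open scoped ComplexOrder in
theorem aux_pos (m : ℕ) (τ : ℝ) (hτ : 0 < τ) : (Dmat m τ).PosDef := by
  unfold Dmat
  refine Matrix.PosDef.diagonal fun i => ?_
  split_ifs
  · exact one_pos
  · exact_mod_cast hτ

/-- For odd `m ≥ 3`, `σ₀ = ±1`, and `P = P*`, all complex eigenvalues
of `D_τ⁻¹ (k A + i B)` are real, for every `k ∈ ℝ` and `τ > 0`. -/
theorem stmt6 (m : ℕ) (hm : 3 ≤ m) (hodd : Odd m) (σ₀ : ℝ) (hσ : σ₀ = 1 ∨ σ₀ = -1)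
    (k τ : ℝ) (hτ : 0 < τ) :
    ∀ z ∈ spectrum ℂ ((Dmat m τ)⁻¹ *
        ((k : ℂ) • (embedA m σ₀ (Pstar m σ₀)).map Complex.ofReal +
          Complex.I • (embedB m (Pstar m σ₀)).map Complex.ofReal)),
      z.im = 0 := by
  intro z hz
  refine aux_real _ _ ?_ ?_ z hz
  · exact aux_pos m τ hτ
  · ext i j
    simp only [Matrix.conjTranspose_apply, Matrix.add_apply, Matrix.smul_apply, Matrix.map_apply]
    rw [aux_symmA m hm hodd σ₀ j i, aux_symmB m hm hodd σ₀ j i]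
    simp
end

section
/- Let m ≥ 2, σ₀ ∈ {1, −1}, and let α₁, …, α_{m−1} be real numbers. Let Â be the m×m real matrix whose first row is (α₁, α₂, …, α_{m−1}, σ₀), whose entries satisfy Â_{i+1,j} = P*_{ij} for 1 ≤ i, j ≤ m−1, and all of whose other entries are zero. Then there exist nonnegative integers a, b with a + b = m − 2 such that the characteristic polynomial of Â equals (X − 1)^a (X + 1)^b (X² − α₁X − 1). In particular, all complex eigenvalues of Â are real. -/
/-- The m×m matrix `Â` with first row `(α₁, …, α_{m-1}, σ₀)`, entries
`Â_{i+1,j} = P*_{ij}` for `1 ≤ i, j ≤ m-1` (1-indexed), and all other entries zero. -/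
noncomputable def Ahat (m : ℕ) (σ₀ : ℝ) (α : Fin (m-1) → ℝ) :
    Matrix (Fin m) (Fin m) ℝ := fun i j =>
  if hi : (i : ℕ) = 0 then
    (if hj : (j : ℕ) < m - 1 then α ⟨(j : ℕ), hj⟩ else σ₀)
  else if hj : (j : ℕ) < m - 1 then
    Pstar m σ₀ ⟨(i : ℕ) - 1, by have := i.isLt; omega⟩ ⟨(j : ℕ), hj⟩
  else 0

theorem Ahat_mid (m : ℕ) (σ₀ : ℝ) (α : Fin (m-1) → ℝ) (i j : Fin m) (hi : (i : ℕ) ≠ 0)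
    : Ahat m σ₀ α i j = if (i : ℕ) + j + 1 = m then
      (if 2 * ((j : ℕ) + 1) ≤ m then σ₀ * (-1) ^ (j : ℕ) else σ₀ * (-1) ^ (i : ℕ)) else 0 := by
  have h1 := i.isLt
  have h2 := j.isLt
  unfold Ahat Pstar
  rw [dif_neg hi]
  by_cases hj : (j : ℕ) < m - 1
  · rw [dif_pos hj]
    simp only
    by_cases h : (i : ℕ) + j + 1 = m
    · rw [if_pos h, if_pos (by omega)]
      have : m - ((j : ℕ) + 1) = i := by omega
      rw [this]
    · rw [if_neg h, if_neg (by omega)]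
  · rw [dif_neg hj, if_neg (by omega)]

theorem herm_invol_charpoly {ι : Type} [Fintype ι] [DecidableEq ι] (B : Matrix ι ι ℝ)
    (hB : B.IsHermitian) (h2 : B * B = 1) :
    ∃ a b : ℕ, a + b = Fintype.card ι ∧
      B.charpoly = (Polynomial.X - 1) ^ a * (Polynomial.X + 1) ^ b := by
  have hev : ∀ i, hB.eigenvalues i = 1 ∨ hB.eigenvalues i = -1 := by
    intro i
    have h := hB.mulVec_eigenvectorBasis i
    set v : ι → ℝ := (hB.eigenvectorBasis i).ofLp with hv
    have hv0 : v ≠ 0 := by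
      intro h0
      apply hB.eigenvectorBasis.orthonormal.ne_zero i
      ext k
      simpa using congrFun h0 k
    have h3 : B.mulVec (B.mulVec v) = v := by
      rw [Matrix.mulVec_mulVec, h2, Matrix.one_mulVec]
    rw [h, Matrix.mulVec_smul, h, smul_smul] at h3
    obtain ⟨k, hk⟩ := Function.ne_iff.mp hv0
    have h4 := congrFun h3 k
    simp only [Pi.smul_apply, smul_eq_mul, Pi.zero_apply] at h4 hk
    have : hB.eigenvalues i * hB.eigenvalues i = 1 := by
      apply mul_right_cancel₀ hk
      rw [h4, one_mul]
    exact mul_self_eq_one_iff.mp this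
  classical
  refine ⟨(Finset.univ.filter fun i => hB.eigenvalues i = 1).card,
    (Finset.univ.filter fun i => ¬ hB.eigenvalues i = 1).card, ?_, ?_⟩
  · rw [Finset.card_filter_add_card_filter_not, Finset.card_univ]
  · rw [hB.charpoly_eq, ← Finset.prod_filter_mul_prod_filter_not Finset.univ
      (fun i => hB.eigenvalues i = 1)]
    congr 1
    · apply Finset.prod_eq_pow_card
      intro i hi
      have := (Finset.mem_filter.mp hi).2
      simp [this]
    · apply Finset.prod_eq_pow_card
      intro i hi
      have := (hev i).resolve_left (Finset.mem_filter.mp hi).2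
      simp [this]

theorem charpoly_block {ι : Type} [Fintype ι] [DecidableEq ι] (M : Matrix ι ι ℝ)
    (p : ι → Prop) [DecidablePred p] (h : ∀ i, ¬ p i → ∀ j, p j → M i j = 0) :
    M.charpoly = (M.toSquareBlockProp p).charpoly *
      (M.toSquareBlockProp fun i => ¬ p i).charpoly := by
  unfold Matrix.charpoly
  rw [Matrix.twoBlockTriangular_det M.charmatrix p]
  · congr 2 <;>
    · ext i j : 1
      simp [Matrix.toSquareBlockProp, Matrix.charmatrix_apply, Matrix.diagonal_apply, Subtype.ext_iff]
  · intro i hi j hj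
    have hne : i ≠ j := by rintro rfl; exact hi hj
    simp [Matrix.charmatrix_apply_ne _ _ _ hne, h i hi j hj]

theorem stmt8_part1 (m : ℕ) (hm : 2 ≤ m) (σ₀ : ℝ) (hσ : σ₀ = 1 ∨ σ₀ = -1)
    (α : Fin (m-1) → ℝ) (h0 : 0 < m - 1) :
    (∃ a b : ℕ, a + b = m - 2 ∧
      (Ahat m σ₀ α).charpoly =
        (Polynomial.X - 1) ^ a * (Polynomial.X + 1) ^ b *
          (Polynomial.X ^ 2 - Polynomial.C (α ⟨0, h0⟩) * Polynomial.X - 1)) := by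
  have hσ2 : σ₀ * σ₀ = 1 := by rcases hσ with h | h <;> rw [h] <;> norm_num
  let p : Fin m → Prop := fun i => (i : ℕ) = 0 ∨ (i : ℕ) = m - 1
  let f : Fin 2 → {i // p i} := ![⟨⟨0, by omega⟩, Or.inl rfl⟩, ⟨⟨m - 1, by omega⟩, Or.inr rfl⟩]
  have hf : Function.Bijective f := by
    constructor
    · intro x y h
      have h' : ((f x).1 : ℕ) = (f y).1 := by rw [h]
      fin_cases x <;> fin_cases y <;> simp [f] at h' ⊢ <;> omega
    · rintro ⟨i, hi | hi⟩
      · exact ⟨0, by simp [f, Subtype.ext_iff, Fin.ext_iff, hi]⟩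
      · exact ⟨1, by simp [f, Subtype.ext_iff, Fin.ext_iff, hi]⟩
  let e := Equiv.ofBijective f hf
  have hcard : Fintype.card {i // ¬ p i} = m - 2 := by
    rw [Fintype.card_subtype_compl, ← Fintype.card_congr e]; simp
  have hz : ∀ i, ¬ p i → ∀ j, p j → Ahat m σ₀ α i j = 0 := by
    intro i hi j hj
    simp only [p] at hi hj
    have := i.isLt
    rw [Ahat_mid _ _ _ _ _ (by omega), if_neg (by omega)]
  set B := (Ahat m σ₀ α).toSquareBlockProp fun i => ¬ p i with hBdef
  have hBa : ∀ i j, B i j = if (i.1 : ℕ) + j.1 + 1 = m then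
      (if 2 * ((j.1 : ℕ) + 1) ≤ m then σ₀ * (-1) ^ (j.1 : ℕ) else σ₀ * (-1) ^ (i.1 : ℕ)) else 0 := by
    intro i j
    exact Ahat_mid _ _ _ _ _ (fun h => i.2 (Or.inl h))
  have hsymm : ∀ i j, B i j = B j i := by
    intro i j
    rw [hBa, hBa]
    by_cases h : (i.1 : ℕ) + j.1 + 1 = m
    · have h' : (j.1 : ℕ) + i.1 + 1 = m := by omega
      rw [if_pos h, if_pos h']
      rcases lt_trichotomy (i.1 : ℕ) (j.1 : ℕ) with h1 | h1 | h1
      · rw [if_neg (by omega), if_pos (by omega)]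
      · rw [h1]
      · rw [if_pos (by omega), if_neg (by omega)]
    · rw [if_neg h, if_neg (by omega)]
  have hsq : ∀ i j, (i.1 : ℕ) + j.1 + 1 = m → B i j * B i j = 1 := by
    intro i j h
    rw [hBa, if_pos h]
    have hp : ∀ k : ℕ, (σ₀ * (-1) ^ k) * (σ₀ * (-1) ^ k) = 1 := by
      intro k
      rw [mul_mul_mul_comm, hσ2, ← mul_pow]; norm_num
    split_ifs <;> apply hp
  have hB : B.IsHermitian := by
    ext i j
    simp [Matrix.conjTranspose_apply, hsymm j i]
  have hB2 : B * B = 1 := by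
    ext i k
    have hi := i.1.isLt
    have hi2 : ¬ ((i.1 : ℕ) = 0 ∨ (i.1 : ℕ) = m - 1) := i.2
    let i' : {i // ¬ p i} := ⟨⟨m - 1 - i.1, by omega⟩, by simp only [p]; omega⟩
    have hii : (i.1 : ℕ) + i'.1 + 1 = m := by simp only [i']; omega
    rw [Matrix.mul_apply, Finset.sum_eq_single i']
    · by_cases hik : i = k
      · subst hik
        rw [hsymm i' i, hsq i i' hii, Matrix.one_apply_eq]
      · rw [Matrix.one_apply_ne hik, hBa i' k, if_neg, mul_zero]
        intro h
        apply hik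
        apply Subtype.ext; apply Fin.ext; omega
    · intro j _ hj
      rw [hBa i j, if_neg, zero_mul]
      intro h
      apply hj
      apply Subtype.ext; apply Fin.ext; omega
    · simp
  obtain ⟨a, b, hab, hc⟩ := herm_invol_charpoly B hB hB2
  refine ⟨a, b, hab.trans hcard, ?_⟩
  rw [charpoly_block _ p hz, ← hBdef, hc, mul_comm]
  congr 1
  rw [← Matrix.charpoly_reindex e.symm]
  have h00 : Ahat m σ₀ α ⟨0, by omega⟩ ⟨0, by omega⟩ = α ⟨0, h0⟩ := by
    unfold Ahat; rw [dif_pos rfl, dif_pos]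
  have h01 : Ahat m σ₀ α ⟨0, by omega⟩ ⟨m - 1, by omega⟩ = σ₀ := by
    unfold Ahat; rw [dif_pos rfl, dif_neg (by simp)]
  have h10 : Ahat m σ₀ α ⟨m - 1, by omega⟩ ⟨0, by omega⟩ = σ₀ := by
    rw [Ahat_mid _ _ _ _ _ (by simp only; omega), if_pos (by simp only; omega),
      if_pos (by simp only; omega)]; simp
  have h11 : Ahat m σ₀ α ⟨m - 1, by omega⟩ ⟨m - 1, by omega⟩ = 0 := by
    rw [Ahat_mid _ _ _ _ _ (by simp only; omega), if_neg (by simp only; omega)]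
  have hM : Matrix.reindex e.symm e.symm ((Ahat m σ₀ α).toSquareBlockProp p)
      = !![α ⟨0, h0⟩, σ₀; σ₀, 0] := by
    ext i j
    fin_cases i <;> fin_cases j
    · exact h00
    · exact h01
    · exact h10
    · exact h11
  rw [hM, Matrix.charpoly_fin_two, Matrix.trace_fin_two, Matrix.det_fin_two]
  simp [hσ2, sub_eq_add_neg]

theorem stmt8 (m : ℕ) (hm : 2 ≤ m) (σ₀ : ℝ) (hσ : σ₀ = 1 ∨ σ₀ = -1)
    (α : Fin (m-1) → ℝ) :
    (∃ a b : ℕ, a + b = m - 2 ∧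
      (Ahat m σ₀ α).charpoly =
        (Polynomial.X - 1) ^ a * (Polynomial.X + 1) ^ b *
          (Polynomial.X ^ 2 - Polynomial.C (α ⟨0, by omega⟩) * Polynomial.X - 1)) ∧
    ∀ z ∈ spectrum ℂ ((Ahat m σ₀ α).map Complex.ofReal), z.im = 0 := by
  have h1 := stmt8_part1 m hm σ₀ hσ α (by omega)
  refine ⟨h1, ?_⟩
  obtain ⟨a, b, -, hc⟩ := h1
  intro z hz
  have hr := Matrix.mem_spectrum_iff_isRoot_charpoly.mp hz
  have hmap : ((Ahat m σ₀ α).map Complex.ofReal).charpoly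
      = (Ahat m σ₀ α).charpoly.map Complex.ofRealHom :=
    Matrix.charpoly_map (Ahat m σ₀ α) Complex.ofRealHom
  rw [hmap, hc] at hr
  simp only [Polynomial.IsRoot.def, Polynomial.map_mul, Polynomial.map_pow, Polynomial.map_sub,
    Polynomial.map_add, Polynomial.map_X, Polynomial.map_one, Polynomial.map_C,
    Polynomial.eval_mul, Polynomial.eval_pow, Polynomial.eval_sub, Polynomial.eval_add,
    Polynomial.eval_X, Polynomial.eval_one, Polynomial.eval_C, mul_eq_zero,
    Complex.ofRealHom_eq_coe] at hr
  rcases hr with (hr | hr) | hr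
  · rw [sub_eq_zero.mp (eq_zero_of_pow_eq_zero hr)]; simp
  · rw [eq_neg_of_add_eq_zero_left (eq_zero_of_pow_eq_zero hr)]; simp
  · have hre := congrArg Complex.re hr
    have him := congrArg Complex.im hr
    simp [pow_two] at hre him
    by_contra hne
    have : 2 * z.re = α ⟨0, by omega⟩ := by
      apply mul_right_cancel₀ hne
      linarith
    rw [← this] at hre
    nlinarith [sq_nonneg z.re, sq_nonneg z.im]
end

section
/- Let m ≥ 2, σ₀ ∈ {1, −1}, and k ∈ ℝ. Then the vector r₀ ∈ ℂ^m with components (r₀)_j = (ik)^{j−1} for j = 1, …, m satisfies L₀ r₀ = 0, and 0 is an eigenvalue of L₀ of algebraic multiplicity exactly one (i.e., 0 is a simple root of the characteristic polynomial of L₀). -/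
/-- The m×m complex matrix `L_τ = -ik Ã_τ + B`, where `Ã_τ` has entry `τσ₀` in
(1-indexed) position (1, m) and `(Ã_τ)_{i+1,j} = P*_{ij}` for `1 ≤ i, j ≤ m-1`,
and `B_{i+1,j+1} = P*_{ij}` with all other entries zero. -/
noncomputable def Lmat (m : ℕ) (σ₀ k τ : ℝ) : Matrix (Fin m) (Fin m) ℂ :=
  (-(Complex.I * (k : ℂ))) • (embedA m (τ * σ₀) (Pstar m σ₀)).map Complex.ofReal
    + (embedB m (Pstar m σ₀)).map Complex.ofReal

/-- The vector `r₀ ∈ ℂ^m` with components `(r₀)_j = (ik)^(j-1)`, `j = 1, …, m`. -/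
noncomputable def r0 (m : ℕ) (k : ℝ) : Fin m → ℂ := fun j => (Complex.I * (k : ℂ)) ^ (j : ℕ)

lemma Lmat_zero_row (n : ℕ) (σ₀ k : ℝ) (j : Fin (n+1)) : Lmat (n+1) σ₀ k 0 0 j = 0 := by
  simp [Lmat, embedA, embedB]

lemma Lmat_succ_row (n : ℕ) (σ₀ k : ℝ) (hσ : σ₀ ≠ 0) (i : Fin n) : ∃ p : ℂ, p ≠ 0 ∧
    ∀ j : Fin (n+1), Lmat (n+1) σ₀ k 0 i.succ j =
      p * ((if (i:ℕ) + j = n then 1 else 0)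
        - (Complex.I * k) * (if (i:ℕ) + j + 1 = n then 1 else 0)) := by
  refine ⟨(((if 2 * (n - (i : ℕ)) ≤ n + 1 then σ₀ * (-1) ^ (n - 1 - (i : ℕ))
     else σ₀ * (-1) ^ (n + 1 - (n - (i : ℕ)))) : ℝ) : ℂ), ?_, ?_⟩
  · rw [Complex.ofReal_ne_zero]
    split_ifs <;> simp [hσ]
  · intro j
    have hi := i.isLt
    have hj := j.isLt
    have hA : embedA (n+1) (0 * σ₀) (Pstar (n+1) σ₀) i.succ j =
        (if 2 * (n - (i : ℕ)) ≤ n + 1 then σ₀ * (-1) ^ (n - 1 - (i : ℕ))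
          else σ₀ * (-1) ^ (n + 1 - (n - (i : ℕ)))) * (if (i:ℕ) + j + 1 = n then 1 else 0) := by
      by_cases h : (i:ℕ) + j + 1 = n
      · have h1 : (j:ℕ) < n := by omega
        have h2 : n - (i:ℕ) = j + 1 := by omega
        have h3 : n - 1 - (i:ℕ) = j := by omega
        have h4 : (i:ℕ) + j + 2 = n + 1 := by omega
        simp only [h2, h3]
        simp [embedA, Pstar, h, h1]
      · by_cases h1 : (j:ℕ) < n
        · simp [embedA, Pstar, h, h1]
        · simp [embedA, h, h1]
    have hB : embedB (n+1) (Pstar (n+1) σ₀) i.succ j =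
        (if 2 * (n - (i : ℕ)) ≤ n + 1 then σ₀ * (-1) ^ (n - 1 - (i : ℕ))
          else σ₀ * (-1) ^ (n + 1 - (n - (i : ℕ)))) * (if (i:ℕ) + j = n then 1 else 0) := by
      by_cases h0 : (j:ℕ) = 0
      · have : (i:ℕ) + j ≠ n := by omega
        simp only [embedB, this]
        simp [h0]
      · obtain ⟨l, hl⟩ : ∃ l, (j:ℕ) = l + 1 := ⟨j - 1, by omega⟩
        by_cases h : (i:ℕ) + j = n
        · have h2 : n - (i:ℕ) = l + 1 := by omega
          have h3 : n - 1 - (i:ℕ) = l := by omega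
          have h4 : (i:ℕ) + l + 1 = n := by omega
          have h5 : (i:ℕ) + (l + 1) = n := by omega
          simp only [h2, h3]
          simp [embedB, Pstar, hl, h4, h5]
        · have h4 : ¬ (i:ℕ) + l + 1 = n := by omega
          have h5 : ¬ (i:ℕ) + (l + 1) = n := by omega
          simp [embedB, Pstar, hl, h4, h5]
    simp only [Lmat, Matrix.add_apply, Matrix.smul_apply, Matrix.map_apply, hA, hB, smul_eq_mul,
      Complex.ofReal_mul]
    split_ifs <;> push_cast <;> ring

lemma charpoly_zero_row (n : ℕ) (M : Matrix (Fin (n+1)) (Fin (n+1)) ℂ) (h : ∀ j, M 0 j = 0) :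
    M.charpoly = Polynomial.X * (M.submatrix Fin.succ Fin.succ).charpoly := by
  rw [Matrix.charpoly, Matrix.det_succ_row_zero, Fin.sum_univ_succ]
  have : ∀ j : Fin n, M.charmatrix 0 j.succ = 0 := by
    intro j
    rw [Matrix.charmatrix_apply_ne _ _ _ (Fin.succ_ne_zero j).symm, h]; simp
  simp only [this]
  have h2 : M.charmatrix.submatrix Fin.succ Fin.succ
      = (M.submatrix Fin.succ Fin.succ).charmatrix := by
    ext1 i j
    simp [Matrix.charmatrix_apply, Matrix.diagonal_apply]
  simp [Matrix.charmatrix_apply_eq, h, Matrix.charpoly, h2]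

/-- The vector `r₀` with `(r₀)_j = (ik)^(j-1)` satisfies `L₀ r₀ = 0`,
and `0` is an eigenvalue of `L₀` of algebraic multiplicity exactly one. -/
theorem stmt9 (m : ℕ) (hm : 2 ≤ m) (σ₀ : ℝ) (hσ : σ₀ = 1 ∨ σ₀ = -1) (k : ℝ) :
    (Lmat m σ₀ k 0).mulVec (r0 m k) = 0 ∧
    Polynomial.rootMultiplicity (0 : ℂ) (Lmat m σ₀ k 0).charpoly = 1 := by
  obtain ⟨n, rfl⟩ : ∃ n, m = n + 1 := ⟨m - 1, by omega⟩
  have hs : σ₀ ≠ 0 := by rcases hσ with h | h <;> simp [h]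
  choose p hp hL using Lmat_succ_row n σ₀ k hs
  constructor
  · funext i
    refine Fin.cases ?_ (fun i => ?_) i
    · simp [Matrix.mulVec, dotProduct, Lmat_zero_row]
    · have hi := i.isLt
      have e1 : ∀ j : Fin (n+1), ((i:ℕ) + j = n) = (j = ⟨n - i, by omega⟩) := by
        intro j; rw [Fin.ext_iff]; apply propext; simp only; omega
      have e2 : ∀ j : Fin (n+1), ((i:ℕ) + j + 1 = n) = (j = ⟨n - 1 - i, by omega⟩) := by
        intro j; rw [Fin.ext_iff]; apply propext; simp only; omega
      have e3 : n - (i:ℕ) = n - 1 - i + 1 := by omega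
      simp only [Matrix.mulVec, dotProduct, hL, e1, e2, r0, mul_assoc, sub_mul, mul_sub,
        Finset.sum_sub_distrib, ite_mul, one_mul, zero_mul, mul_ite, mul_zero,
        Finset.sum_ite_eq', Finset.sum_ite_eq, Finset.mem_univ, if_true, Pi.zero_apply]
      rw [e3]
      ring
  · rw [charpoly_zero_row n _ (Lmat_zero_row n σ₀ k)]
    set D := (Lmat (n+1) σ₀ k 0).submatrix Fin.succ Fin.succ with hD
    have hdet : D.det ≠ 0 := by
      have h1 := Matrix.det_permute (Fin.revPerm : Equiv.Perm (Fin n)) D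
      have h2 : (D.submatrix (Fin.revPerm : Equiv.Perm (Fin n)) id).det ≠ 0 := by
        rw [Matrix.det_of_lowerTriangular]
        · rw [Finset.prod_ne_zero_iff]
          intro r _
          have hr := r.isLt
          have a1 : n - ((r:ℕ) + 1) + (r + 1) = n := by omega
          have a2 : n - ((r:ℕ) + 1) + (r + 1) + 1 ≠ n := by omega
          simp only [hD, Matrix.submatrix_apply, hL, Fin.revPerm_apply, Fin.val_rev, id,
            Fin.val_succ, a1]
          simp [hp]
        · intro r s hrs
          have hrs : (r:ℕ) < s := hrs
          have hr := r.isLt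
          have a1 : n - ((r:ℕ) + 1) + (s + 1) ≠ n := by omega
          have a2 : n - ((r:ℕ) + 1) + (s + 1) + 1 ≠ n := by omega
          simp only [hD, Matrix.submatrix_apply, hL, Fin.revPerm_apply, Fin.val_rev, id,
            Fin.val_succ, a1, a2]
          simp
      intro h0
      rw [h0, mul_zero] at h1
      exact h2 h1
    have hroot : ¬ D.charpoly.IsRoot 0 := by
      intro h
      apply hdet
      rw [Matrix.det_eq_sign_charpoly_coeff, Polynomial.coeff_zero_eq_eval_zero, h.eq_zero,
        mul_zero]
    have hX : Polynomial.rootMultiplicity (0:ℂ) Polynomial.X = 1 := by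
      simpa using Polynomial.rootMultiplicity_X_sub_C_self (x := (0:ℂ))
    rw [Polynomial.rootMultiplicity_mul, hX, Polynomial.rootMultiplicity_eq_zero hroot]
    exact mul_ne_zero Polynomial.X_ne_zero (Matrix.charpoly_monic D).ne_zero
end

section
/- Let m ≥ 3 be odd, σ₀ ∈ {1, −1}, and let k ∈ ℝ with k ≠ 0. Then the matrix L₀ has m pairwise distinct complex eigenvalues (hence is diagonalizable), and every eigenvalue of L₀ has zero real part. -/
lemma aux_entry (m : ℕ) (hm : 3 ≤ m) (hodd : Odd m) (σ₀ k : ℝ) (i j : Fin m) :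
    Lmat m σ₀ k 0 i j = if (i : ℕ) = 0 then 0 else
      (if (j : ℕ) = m - 1 - i then -(Complex.I * k) * (σ₀ * (-1) ^ (i : ℕ)) else 0) +
      (if (j : ℕ) = m - i then (σ₀ * (-1) ^ (i : ℕ) : ℂ) else 0) := by
  have hi := i.isLt
  have hj := j.isLt
  obtain ⟨n, hn⟩ := hodd
  by_cases h0 : (i : ℕ) = 0
  · simp [Lmat, embedA, embedB, h0]
  have hs : ∀ a b : ℕ, a % 2 = b % 2 → ((-1 : ℂ)) ^ a = (-1) ^ b := by
    intro a b h
    rw [neg_one_pow_eq_pow_mod_two, h, ← neg_one_pow_eq_pow_mod_two]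
  simp only [h0, if_false]
  have key : ∀ a b : Fin (m-1), ((Pstar m σ₀ a b : ℝ) : ℂ) =
      if (a : ℕ) + b + 2 = m then (σ₀ * (-1) ^ (a + 1 : ℕ) : ℂ) else 0 := by
    intro a b
    unfold Pstar
    split_ifs with h1 h2
    · push_cast
      rw [hs (b : ℕ) (a + 1) (by omega)]
    · push_cast
      rw [hs (m - (b + 1)) (a + 1) (by omega)]
    · simp
  have e1 : ((embedA m (0 * σ₀) (Pstar m σ₀) i j : ℝ) : ℂ) =
      if (j : ℕ) = m - 1 - i then (σ₀ * (-1) ^ (i : ℕ) : ℂ) else 0 := by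
    unfold embedA
    rw [dif_neg h0]
    by_cases hj2 : (j : ℕ) < m - 1
    · rw [dif_pos hj2, key]
      simp only [Nat.sub_add_cancel (Nat.pos_of_ne_zero h0)]
      congr 1
      apply propext
      omega
    · rw [dif_neg hj2, if_neg (by omega)]
      simp
  have e2 : ((embedB m (Pstar m σ₀) i j : ℝ) : ℂ) =
      if (j : ℕ) = m - i then (σ₀ * (-1) ^ (i : ℕ) : ℂ) else 0 := by
    unfold embedB
    by_cases hj0 : (j : ℕ) = 0
    · rw [dif_pos (Or.inr hj0), if_neg (by omega)]
      simp
    · rw [dif_neg (by tauto), key]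
      simp only [Nat.sub_add_cancel (Nat.pos_of_ne_zero h0)]
      congr 1
      apply propext
      omega
  simp only [Lmat, Matrix.add_apply, Matrix.smul_apply, Matrix.map_apply, smul_eq_mul]
  rw [e1, e2]
  congr 1
  split_ifs <;> simp

lemma aux_row0 (m : ℕ) (hm : 3 ≤ m) (hodd : Odd m) (σ₀ k : ℝ) (v : Fin m → ℂ) (i : Fin m)
    (h0 : (i : ℕ) = 0) : (Lmat m σ₀ k 0).mulVec v i = 0 := by
  simp [Matrix.mulVec, dotProduct, aux_entry m hm hodd, h0]

lemma aux_row (m : ℕ) (hm : 3 ≤ m) (hodd : Odd m) (σ₀ k : ℝ) (v : Fin m → ℂ) (i : Fin m)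
    (h0 : (i : ℕ) ≠ 0) (a b : Fin m) (ha : (a : ℕ) = m - 1 - i) (hb : (b : ℕ) = m - i) :
    (Lmat m σ₀ k 0).mulVec v i = (σ₀ * (-1) ^ (i : ℕ)) * (v b - Complex.I * k * v a) := by
  simp only [Matrix.mulVec, dotProduct, aux_entry m hm hodd, if_neg h0, ← ha, ← hb, ← Fin.ext_iff,
    add_mul, Finset.sum_add_distrib, ite_mul, zero_mul, Finset.sum_ite_eq', Finset.mem_univ,
    if_true]
  ring

lemma aux_simple (m : ℕ) (hm : 3 ≤ m) (hodd : Odd m) (σ₀ : ℝ) (hσ : σ₀ = 1 ∨ σ₀ = -1)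
    (k : ℝ) (hk : k ≠ 0) (z : ℂ) :
    ∃ p : Fin m, ∀ v : Fin m → ℂ, (Lmat m σ₀ k 0).mulVec v = z • v → v p = 0 → v = 0 := by
  have hσ' : (σ₀ : ℂ) ≠ 0 := by rcases hσ with h | h <;> simp [h]
  have hs : ∀ n : ℕ, (σ₀ * (-1) ^ n : ℂ) ≠ 0 := fun n =>
    mul_ne_zero hσ' (pow_ne_zero _ (by norm_num))
  have hIk : Complex.I * (k : ℂ) ≠ 0 := mul_ne_zero Complex.I_ne_zero (by exact_mod_cast hk)
  by_cases hz : z = 0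
  · subst hz
    refine ⟨⟨0, by omega⟩, fun v hv h0 => ?_⟩
    have H : ∀ n (hn : n < m), v ⟨n, hn⟩ = 0 := by
      intro n
      induction n with
      | zero => intro hn; exact h0
      | succ n ih =>
        intro hn
        have r := aux_row m hm hodd σ₀ k v ⟨m - 1 - n, by omega⟩ (by simp; omega)
          ⟨n, by omega⟩ ⟨n + 1, hn⟩ (by simp; omega) (by simp; omega)
        rw [hv, ih (by omega)] at r
        simp only [zero_smul, Pi.zero_apply, mul_zero, sub_zero] at r
        exact (mul_eq_zero.mp r.symm).resolve_left (hs _)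
    funext i
    exact H i i.isLt
  · refine ⟨⟨m - 1, by omega⟩, fun v hv h0 => ?_⟩
    have H : ∀ n (hn : n < m), v ⟨n, hn⟩ = 0 ∧ v ⟨m - 1 - n, by omega⟩ = 0 := by
      intro n
      induction n with
      | zero =>
        intro hn
        refine ⟨?_, h0⟩
        have r := aux_row0 m hm hodd σ₀ k v ⟨0, hn⟩ rfl
        rw [hv] at r
        simpa [hz] using r
      | succ n ih =>
        intro hn
        obtain ⟨i1, i2⟩ := ih (by omega)
        have r := aux_row m hm hodd σ₀ k v ⟨m - 1 - n, by omega⟩ (by simp; omega)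
          ⟨n, by omega⟩ ⟨n + 1, hn⟩ (by simp; omega) (by simp; omega)
        rw [hv, i1] at r
        simp only [Pi.smul_apply, i2, smul_zero, mul_zero, sub_zero] at r
        have r1 := (mul_eq_zero.mp r.symm).resolve_left (hs _)
        refine ⟨r1, ?_⟩
        have r := aux_row m hm hodd σ₀ k v ⟨n + 1, hn⟩ (by simp)
          ⟨m - 1 - (n + 1), by omega⟩ ⟨m - 1 - n, by omega⟩ (by simp) (by simp; omega)
        rw [hv, i2] at r
        simp only [Pi.smul_apply, r1, smul_zero, zero_sub] at r
        have r2 := (mul_eq_zero.mp r.symm).resolve_left (hs _)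
        exact (mul_eq_zero.mp (neg_eq_zero.mp r2)).resolve_left hIk
    funext i
    exact (H i i.isLt).1

lemma aux_diag (m : ℕ) (hm : 3 ≤ m) (hodd : Odd m) (σ₀ : ℝ) (k : ℝ) :
    ∃ (Q : Matrix (Fin m) (Fin m) ℂ) (d : Fin m → ℂ),
      IsUnit Q.det ∧ Lmat m σ₀ k 0 = Q * Matrix.diagonal d * Q⁻¹ ∧ ∀ i, (d i).re = 0 := by
  set L := Lmat m σ₀ k 0 with hL
  let E : Matrix (Fin m) (Fin m) ℂ := fun i j =>
    if (j : ℕ) = 0 ∧ (i : ℕ) ≠ 0 then (Complex.I * k) ^ (i : ℕ) else 0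
  have hEE : E * E = 0 := by
    ext i j
    rw [Matrix.mul_apply]
    apply Finset.sum_eq_zero
    intro a _
    by_cases h : (a : ℕ) = 0 <;> simp [E, h]
  have hEL : E * L = 0 := by
    ext i j
    rw [Matrix.mul_apply]
    apply Finset.sum_eq_zero
    intro a _
    by_cases h : (a : ℕ) = 0
    · rw [hL, aux_entry m hm hodd, if_pos h, mul_zero]
    · simp [E, h]
  have h1 : (1 + E) * (1 - E) = 1 := by
    rw [add_mul, mul_sub, mul_sub, hEE]; simp
  have h2 : (1 - E) * (1 + E) = 1 := by
    rw [sub_mul, mul_add, mul_add, hEE]; simp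
  let N := L * (1 + E)
  have hN : ∀ i j : Fin m, N i j = if (j : ℕ) = 0 then 0 else L i j := by
    intro i j
    split_ifs with h
    · have e : N i j = L.mulVec (fun a => (Complex.I * k) ^ (a : ℕ)) i := by
        simp only [N, Matrix.mul_apply, Matrix.mulVec, dotProduct]
        apply Finset.sum_congr rfl
        intro a _
        congr 1
        rw [Matrix.add_apply, Matrix.one_apply]
        simp only [Fin.ext_iff, h, E]
        by_cases ha : (a : ℕ) = 0 <;> simp [ha]
      rw [e]
      by_cases hi : (i : ℕ) = 0
      · exact aux_row0 m hm hodd σ₀ k _ i hi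
      · have := i.isLt
        rw [hL, aux_row m hm hodd σ₀ k _ i hi ⟨m - 1 - i, by omega⟩ ⟨m - i, by omega⟩ rfl rfl]
        have : m - (i : ℕ) = m - 1 - i + 1 := by omega
        simp only [this, pow_succ]
        ring
    · simp only [N, mul_add, mul_one, Matrix.add_apply, add_eq_left]
      rw [Matrix.mul_apply]
      apply Finset.sum_eq_zero
      intro a _
      simp [E, h]
  have hskew : ∀ i j : Fin m, star (N j i) = - N i j := by
    intro i j
    have hi := i.isLt
    have hj := j.isLt
    rw [hN, hN, hL, aux_entry m hm hodd, aux_entry m hm hodd]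
    by_cases h0 : (i : ℕ) = 0
    · simp [h0]
    by_cases h0' : (j : ℕ) = 0
    · simp [h0']
    simp only [h0, h0', if_false]
    obtain ⟨n, hn⟩ := hodd
    by_cases c1 : (j : ℕ) = m - 1 - i
    · rw [if_pos (by omega), if_neg (by omega), if_pos c1, if_neg (by omega)]
      have : ((-1 : ℂ)) ^ (j : ℕ) = (-1) ^ (i : ℕ) := by
        rw [neg_one_pow_eq_pow_mod_two, show (j : ℕ) % 2 = (i : ℕ) % 2 by omega,
          ← neg_one_pow_eq_pow_mod_two]
      simp [this]
    · by_cases c2 : (j : ℕ) = m - i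
      · rw [if_neg (by omega), if_pos (by omega), if_neg c1, if_pos c2]
        have : ((-1 : ℂ)) ^ (j : ℕ) = - (-1) ^ (i : ℕ) := by
          rw [neg_one_pow_eq_pow_mod_two, show (j : ℕ) % 2 = ((i : ℕ) + 1) % 2 by omega,
            ← neg_one_pow_eq_pow_mod_two, pow_succ]
          ring
        simp [this]
      · rw [if_neg (by omega), if_neg (by omega), if_neg c1, if_neg c2]
        simp
  have hH : (Complex.I • N).IsHermitian := by
    ext i j
    have := hskew i j
    simp only [Matrix.conjTranspose_apply, Matrix.smul_apply, smul_eq_mul, star_mul', this]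
    simp
  have hspec := hH.spectral_theorem
  rw [Unitary.conjStarAlgAut_apply] at hspec
  have u1 : (hH.eigenvectorUnitary : Matrix (Fin m) (Fin m) ℂ) *
      star (hH.eigenvectorUnitary : Matrix (Fin m) (Fin m) ℂ) = 1 := Unitary.coe_mul_star_self _
  generalize (hH.eigenvectorUnitary : Matrix (Fin m) (Fin m) ℂ) = U at hspec u1
  generalize hH.eigenvalues = ev at hspec
  have hNd : N = U * Matrix.diagonal (fun i => -Complex.I * (ev i : ℂ)) * star U := by
    have e : N = (-Complex.I) • (Complex.I • N) := by
      rw [smul_smul]; simp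
    rw [e, hspec]
    have : Matrix.diagonal (fun i => -Complex.I * (ev i : ℂ)) =
        (-Complex.I) • Matrix.diagonal (RCLike.ofReal ∘ ev) := by
      ext i j
      by_cases h : i = j <;> simp [Matrix.diagonal, h]
    rw [this]
    simp
  have hQ : ((1 + E) * U) * (star U * (1 - E)) = 1 := by
    rw [mul_assoc, ← mul_assoc U, u1, one_mul, h1]
  refine ⟨(1 + E) * U, fun i => -Complex.I * (ev i : ℂ), ?_, ?_, ?_⟩
  · exact Matrix.isUnit_det_of_right_inverse hQ
  · rw [Matrix.inv_eq_right_inv hQ]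
    have : (1 + E) * U * Matrix.diagonal (fun i => -Complex.I * (ev i : ℂ)) *
        (star U * (1 - E)) = (1 + E) * N * (1 - E) := by
      rw [hNd]; simp only [mul_assoc]
    rw [this]
    simp only [N]
    rw [← mul_assoc, add_mul, hEL, one_mul, add_zero, mul_assoc, h1, mul_one]
  · intro i; simp

/-- For odd `m ≥ 3` and `k ≠ 0`, the matrix `L₀` has `m` pairwise
distinct complex eigenvalues (hence is diagonalizable), and every eigenvalue of `L₀`
has zero real part. -/
theorem stmt10 (m : ℕ) (hm : 3 ≤ m) (hodd : Odd m) (σ₀ : ℝ) (hσ : σ₀ = 1 ∨ σ₀ = -1)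
    (k : ℝ) (hk : k ≠ 0) :
    (Multiset.card (Lmat m σ₀ k 0).charpoly.roots = m ∧
      (Lmat m σ₀ k 0).charpoly.roots.Nodup) ∧
    (∃ (Q : Matrix (Fin m) (Fin m) ℂ) (d : Fin m → ℂ),
      IsUnit Q.det ∧ Lmat m σ₀ k 0 = Q * Matrix.diagonal d * Q⁻¹) ∧
    ∀ z ∈ spectrum ℂ (Lmat m σ₀ k 0), z.re = 0 := by
  obtain ⟨Q, d, hQ, hL, hd⟩ := aux_diag m hm hodd σ₀ k
  have hQQ : Q⁻¹ * Q = 1 := Matrix.nonsing_inv_mul _ hQ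
  have hchar : (Lmat m σ₀ k 0).charpoly = ∏ i, (Polynomial.X - Polynomial.C (d i)) := by
    rw [hL, Matrix.charpoly_mul_comm, ← mul_assoc, hQQ, one_mul, Matrix.charpoly_diagonal]
  have hroots : (Lmat m σ₀ k 0).charpoly.roots = Multiset.map d Finset.univ.val := by
    rw [hchar]
    have := Polynomial.roots_multiset_prod_X_sub_C (Multiset.map d Finset.univ.val)
    rwa [Multiset.map_map] at this
  have hLQ : Lmat m σ₀ k 0 * Q = Q * Matrix.diagonal d := by
    rw [hL, mul_assoc, hQQ, mul_one]
  have heig : ∀ a, (Lmat m σ₀ k 0).mulVec (Q.mulVec (Pi.single a 1)) =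
      d a • Q.mulVec (Pi.single a 1) := by
    intro a
    rw [Matrix.mulVec_mulVec, hLQ, ← Matrix.mulVec_mulVec, ← Matrix.mulVec_smul]
    congr 1
    ext b
    by_cases h : b = a
    · subst h; simp [Matrix.mulVec_diagonal]
    · simp [Matrix.mulVec_diagonal, h]
  have hker : ∀ w : Fin m → ℂ, Q.mulVec w = 0 → w = 0 := by
    intro w hw
    have : (Q⁻¹ * Q).mulVec w = 0 := by rw [← Matrix.mulVec_mulVec, hw, Matrix.mulVec_zero]
    rwa [hQQ, Matrix.one_mulVec] at this
  have hinj : Function.Injective d := by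
    intro a b hab
    by_contra hne
    obtain ⟨p, hp⟩ := aux_simple m hm hodd σ₀ hσ k hk (d a)
    set x := Q.mulVec (Pi.single a 1) with hx
    set y := Q.mulVec (Pi.single b 1) with hy
    have hyb : (Lmat m σ₀ k 0).mulVec y = d a • y := by rw [hab]; exact heig b
    have h0 : x p • y - y p • x = 0 := by
      apply hp
      · rw [Matrix.mulVec_sub, Matrix.mulVec_smul, Matrix.mulVec_smul, hyb, heig a, smul_sub,
          smul_comm, smul_comm (d a) (y p)]
      · simp [mul_comm]
    have h1 : x p • (Pi.single b 1 : Fin m → ℂ) - y p • (Pi.single a 1 : Fin m → ℂ) = 0 := by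
      apply hker
      rw [Matrix.mulVec_sub, Matrix.mulVec_smul, Matrix.mulVec_smul, h0]
    have h2 : x p = 0 := by
      have := congrFun h1 b
      simpa [Ne.symm hne] using this
    have h3 : x = 0 := hp x (heig a) h2
    have h4 := congrFun (hker _ h3) a
    simp at h4
  refine ⟨⟨by rw [hroots]; simp, ?_⟩, ⟨Q, d, hQ, hL⟩, ?_⟩
  · rw [hroots]
    exact Finset.univ.nodup.map hinj
  · intro z hz
    rw [Matrix.mem_spectrum_iff_isRoot_charpoly, hchar, Polynomial.IsRoot,
      Polynomial.eval_prod, Finset.prod_eq_zero_iff] at hz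
    obtain ⟨i, -, hi⟩ := hz
    have : z = d i := by simpa [sub_eq_zero] using hi
    rw [this, hd]
end

section
/- Let m ≥ 3 be odd, σ₀ ∈ {1, −1}, k ∈ ℝ, and τ > 0. Then the matrix L_τ is diagonalizable over ℂ and every complex eigenvalue of L_τ has zero real part. -/
theorem Lmat_entry (m : ℕ) (hm : 3 ≤ m) (hodd : Odd m) (σ₀ k τ : ℝ) (i j : Fin m) :
    Lmat m σ₀ k τ i j =
      if (i : ℕ) + j + 1 = m then
        -(Complex.I * k) * (σ₀ * (-1) ^ (j : ℕ) * (if (i : ℕ) = 0 then (τ : ℂ) else 1))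
      else if (i : ℕ) + j = m then -(σ₀ * (-1) ^ (j : ℕ)) else 0 := by
  obtain ⟨n, rfl⟩ := hodd
  obtain ⟨i, hi⟩ := i
  obtain ⟨j, hj⟩ := j
  have hA : embedA (2*n+1) (τ * σ₀) (Pstar (2*n+1) σ₀) ⟨i, hi⟩ ⟨j, hj⟩ =
      if i + j + 1 = 2*n+1 then σ₀ * (-1) ^ j * (if i = 0 then τ else 1) else 0 := by
    unfold embedA Pstar
    by_cases h0 : i = 0
    · subst h0
      by_cases h1 : j = 2 * n
      · subst h1
        simp [pow_mul]
        ring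
      · simp [h1]
    · by_cases h1 : i + j + 1 = 2*n+1
      · have h2 : j < 2 * n + 1 - 1 := by omega
        have h3 : i - 1 + j + 2 = 2 * n + 1 := by omega
        have h4 : (-1 : ℝ) ^ (2 * n + 1 - (j + 1)) = (-1) ^ j := by
          rw [neg_one_pow_eq_pow_mod_two, neg_one_pow_eq_pow_mod_two (n := j)]
          congr 1
          omega
        simp only [h0, h1, h2, h3, h4]
        simp
      · have h3 : ¬ (i - 1 + j + 2 = 2 * n + 1) := by omega
        rw [if_neg h1]
        simp [h0, h3]
  have hB : embedB (2*n+1) (Pstar (2*n+1) σ₀) ⟨i, hi⟩ ⟨j, hj⟩ =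
      if i + j = 2*n+1 then -(σ₀ * (-1) ^ j) else 0 := by
    unfold embedB Pstar
    by_cases h0 : i = 0 ∨ j = 0
    · have h1 : i + j ≠ 2 * n + 1 := by omega
      simp [h0, h1]
    · by_cases h1 : i + j = 2*n+1
      · have h3 : i - 1 + (j - 1) + 2 = 2 * n + 1 := by omega
        obtain ⟨l, rfl⟩ : ∃ l, j = l + 1 := ⟨j - 1, by omega⟩
        have h4 : (-1 : ℝ) ^ (2 * n + 1 - (l + 1 - 1 + 1)) = (-1) ^ l := by
          rw [neg_one_pow_eq_pow_mod_two, neg_one_pow_eq_pow_mod_two (n := l)]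
          congr 1
          omega
        simp only [h0, h1, h3, h4]
        simp [pow_succ]
      · have h3 : ¬ (i - 1 + (j - 1) + 2 = 2 * n + 1) := by omega
        simp [h0, h1, h3]
  simp only [Lmat, Matrix.add_apply, Matrix.smul_apply, Matrix.map_apply, hA, hB]
  by_cases h1 : i + j + 1 = 2 * n + 1
  · have h2 : i + j ≠ 2 * n + 1 := by omega
    rw [if_pos h1, if_pos h1, if_neg h2]
    by_cases h0 : i = 0 <;> simp [h0]
  · rw [if_neg h1, if_neg h1]
    by_cases h2 : i + j = 2 * n + 1 <;> simp [h2]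

/-- For odd `m ≥ 3`, `σ₀ = ±1`, `k ∈ ℝ`, and `τ > 0`, the matrix
`L_τ` is diagonalizable over ℂ and every complex eigenvalue of `L_τ` has zero real
part. -/
theorem stmt11 (m : ℕ) (hm : 3 ≤ m) (hodd : Odd m) (σ₀ : ℝ) (hσ : σ₀ = 1 ∨ σ₀ = -1)
    (k τ : ℝ) (hτ : 0 < τ) :
    (∃ (Q : Matrix (Fin m) (Fin m) ℂ) (d : Fin m → ℂ),
      IsUnit Q.det ∧ Lmat m σ₀ k τ = Q * Matrix.diagonal d * Q⁻¹) ∧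
    ∀ z ∈ spectrum ℂ (Lmat m σ₀ k τ), z.re = 0 := by
  have hs0 : (√τ : ℂ) ≠ 0 := by exact_mod_cast (Real.sqrt_pos.2 hτ).ne'
  have hss : (√τ : ℂ) * √τ = τ := by exact_mod_cast Real.mul_self_sqrt hτ.le
  let s : Fin m → ℂ := fun i => if (i : ℕ) = 0 then (√τ : ℂ) else 1
  have hs : ∀ i, s i ≠ 0 := by
    intro i
    simp only [s]
    split_ifs
    · exact hs0
    · exact one_ne_zero
  let H : Matrix (Fin m) (Fin m) ℂ :=
    Matrix.of fun i j => Complex.I * ((s i)⁻¹ * Lmat m σ₀ k τ i j * s j)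
  have hHe : ∀ i j, H i j = Complex.I * ((s i)⁻¹ * Lmat m σ₀ k τ i j * s j) := fun i j => rfl
  have hH : H.IsHermitian := by
    ext i j
    simp only [Matrix.conjTranspose_apply, hHe, Lmat_entry m hm hodd, s]
    clear hHe hs
    clear H
    clear s
    obtain ⟨n, rfl⟩ := hodd
    obtain ⟨i, hi⟩ := i
    obtain ⟨j, hj⟩ := j
    by_cases h1 : i + j + 1 = 2 * n + 1
    · have h1' : j + i + 1 = 2 * n + 1 := by omega
      have hp : (-1 : ℂ) ^ j = (-1) ^ i := by
        rw [neg_one_pow_eq_pow_mod_two, neg_one_pow_eq_pow_mod_two (n := i)]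
        congr 1
        omega
      rw [if_pos h1, if_pos h1']
      by_cases hi0 : i = 0
      · have hj0 : j ≠ 0 := by omega
        rw [hp, ← hss]
        simp [hi0, hj0]
        field_simp
      · by_cases hj0 : j = 0
        · rw [← hp, ← hss]
          simp [hi0, hj0]
          field_simp
        · simp [hi0, hj0, hp]
    · by_cases h2 : i + j = 2 * n + 1
      · have h1' : ¬ (j + i + 1 = 2 * n + 1) := by omega
        have h2' : j + i = 2 * n + 1 := by omega
        have hi0 : i ≠ 0 := by omega
        have hj0 : j ≠ 0 := by omega
        have hp : (-1 : ℂ) ^ j = -(-1) ^ i := by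
          rw [show -(-1 : ℂ) ^ i = (-1) ^ (i + 1) by rw [pow_succ]; ring, neg_one_pow_eq_pow_mod_two,
            neg_one_pow_eq_pow_mod_two (n := i + 1)]
          congr 1
          omega
        rw [if_neg h1, if_neg h1', if_pos h2, if_pos h2', hp]
        simp [hi0, hj0]
      · have h1' : ¬ (j + i + 1 = 2 * n + 1) := by omega
        have h2' : ¬ (j + i = 2 * n + 1) := by omega
        rw [if_neg h1, if_neg h1', if_neg h2, if_neg h2']
        simp
  have key : ∃ (Q : Matrix (Fin m) (Fin m) ℂ) (d : Fin m → ℝ),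
      IsUnit Q.det ∧ Lmat m σ₀ k τ =
        Q * Matrix.diagonal (fun i => -Complex.I * (d i : ℂ)) * Q⁻¹ := by
    let U : Matrix (Fin m) (Fin m) ℂ := hH.eigenvectorUnitary
    have hUU : U * star U = 1 := Unitary.coe_mul_star_self hH.eigenvectorUnitary
    have hsp : H = U * Matrix.diagonal (fun i => (hH.eigenvalues i : ℂ)) * star U := by
      have := hH.spectral_theorem
      rw [Unitary.conjStarAlgAut_apply] at this
      exact this
    let T : Matrix (Fin m) (Fin m) ℂ := Matrix.diagonal (fun i => (s i)⁻¹)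
    have hST : Matrix.diagonal s * T = 1 := by
      simp only [T, Matrix.diagonal_mul_diagonal]
      rw [← Matrix.diagonal_one]
      congr 1
      funext i
      exact mul_inv_cancel₀ (hs i)
    have hQ : (Matrix.diagonal s * U) * (star U * T) = 1 := by
      rw [Matrix.mul_assoc, ← Matrix.mul_assoc U, hUU, Matrix.one_mul, hST]
    refine ⟨Matrix.diagonal s * U, hH.eigenvalues, ?_, ?_⟩
    · exact Matrix.isUnit_det_of_right_inverse hQ
    · rw [Matrix.inv_eq_right_inv hQ]
      have hD : Matrix.diagonal (fun i => -Complex.I * (hH.eigenvalues i : ℂ)) =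
          (-Complex.I) • Matrix.diagonal (fun i => (hH.eigenvalues i : ℂ)) := by
        rw [← Matrix.diagonal_smul]
        rfl
      have hL : Lmat m σ₀ k τ = (-Complex.I) • (Matrix.diagonal s * H * T) := by
        ext i j
        simp only [Matrix.smul_apply, T, Matrix.mul_diagonal, Matrix.diagonal_mul, hHe, smul_eq_mul]
        have := hs i
        have := hs j
        field_simp
        simp
      rw [hL, hD]
      nth_rewrite 1 [hsp]
      simp only [Matrix.mul_assoc, Matrix.smul_mul, Matrix.mul_smul]
  obtain ⟨Q, d, hQ, hL⟩ := key
  refine ⟨⟨Q, _, hQ, hL⟩, ?_⟩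
  intro z hz
  have hu : IsUnit Q := (Matrix.isUnit_iff_isUnit_det Q).2 hQ
  obtain ⟨u, rfl⟩ := hu
  rw [hL, ← Matrix.coe_units_inv, spectrum.units_conjugate, spectrum_diagonal] at hz
  obtain ⟨i, rfl⟩ := hz
  simp
end

section
/- Let τ > 0 and k ∈ ℝ. Then both roots of the quadratic equation τω² + ω − k² = 0 are real, given by ω± = (−1 ± √(1 + 4k²τ))/(2τ), and the root ω₊ = (−1 + √(1 + 4k²τ))/(2τ) satisfies |ω₊ − k²| ≤ τk⁴. In particular, ω₊ approximates the dispersion relation ω = k² of the linear Schrödinger equation i∂ₜu + ∂ₓ²u = 0 with error O(τk⁴). -/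
/-- For `τ > 0` and `k ∈ ℝ`, both roots of `τω² + ω - k² = 0` are
real, given by `ω± = (-1 ± √(1 + 4k²τ))/(2τ)`, and `|ω₊ - k²| ≤ τk⁴`. -/
theorem stmt16 (τ : ℝ) (hτ : 0 < τ) (k : ℝ) :
    (∀ ω : ℂ, (τ : ℂ) * ω ^ 2 + ω - (k : ℂ) ^ 2 = 0 ↔
      (ω = (((-1 + Real.sqrt (1 + 4 * k ^ 2 * τ)) / (2 * τ) : ℝ) : ℂ) ∨
       ω = (((-1 - Real.sqrt (1 + 4 * k ^ 2 * τ)) / (2 * τ) : ℝ) : ℂ))) ∧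
    |(-1 + Real.sqrt (1 + 4 * k ^ 2 * τ)) / (2 * τ) - k ^ 2| ≤ τ * k ^ 4 := by
  have hD : 0 ≤ 1 + 4 * k ^ 2 * τ := by positivity
  have hs := Real.mul_self_sqrt hD
  have h1 : 1 ≤ Real.sqrt (1 + 4 * k ^ 2 * τ) := by
    rw [Real.one_le_sqrt]
    have : 0 ≤ 4 * k ^ 2 * τ := by positivity
    linarith
  generalize Real.sqrt (1 + 4 * k ^ 2 * τ) = s at hs h1 ⊢
  constructor
  · intro ω
    have ha : (τ : ℂ) ≠ 0 := by exact_mod_cast hτ.ne'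
    have hs2 : (s : ℂ) * s = 1 + 4 * (k : ℂ) ^ 2 * τ := by exact_mod_cast hs
    have hd : discrim (τ : ℂ) 1 (-(k : ℂ) ^ 2) = (s : ℂ) * s := by
      rw [hs2, discrim]; ring
    have h := quadratic_eq_zero_iff ha hd ω
    push_cast
    rw [← h]
    have e : (τ : ℂ) * ω ^ 2 + ω - (k : ℂ) ^ 2
        = (τ : ℂ) * (ω * ω) + 1 * ω + -(k : ℂ) ^ 2 := by ring
    rw [e]
  · obtain ⟨w, hw⟩ : ∃ w, w = (-1 + s) / (2 * τ) := ⟨_, rfl⟩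
    have hw0 : 0 ≤ w := by
      rw [hw]; exact div_nonneg (by linarith) (by linarith)
    rw [← hw]
    have hsw : s = 2 * τ * w + 1 := by
      rw [hw]; field_simp; ring
    have hq : τ * w ^ 2 + w = k ^ 2 := by
      have : (4 * τ) * (τ * w ^ 2 + w) = (4 * τ) * k ^ 2 := by
        rw [hsw] at hs; linarith
      exact mul_left_cancel₀ (by positivity) this
    have hp : 0 ≤ τ * w ^ 2 := by positivity
    have hle : w ≤ k ^ 2 := by linarith
    have h2 : w ^ 2 ≤ (k ^ 2) ^ 2 := pow_le_pow_left₀ hw0 hle 2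
    have h3 : τ * w ^ 2 ≤ τ * (k ^ 2) ^ 2 := mul_le_mul_of_nonneg_left h2 hτ.le
    have h4 : τ * k ^ 4 = τ * (k ^ 2) ^ 2 := by ring
    rw [abs_sub_comm, abs_of_nonneg (by linarith), h4]
    linarith
end
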